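/- (Multilateral analogue of Bailey's ₃ψ₃ summation, δ = 0 case.) Let n be a positive integer and q, s, a, x ∈ ℂ with 0 < |q| < 1, a ≠ 0, x ≠ 0, s ≠ 0. Assume that none of s, as, x, ax, sx^{-1}, asx equals q^m for any integer m (so that all factors below are nonzero), and assume the family over μ ∈ ℤⁿ on the right-hand side is absolutely summable. Then ∏_{i=1}^{n-1} (1 + q^{n-i}) · [(sx^{-1})_{∞ⁿ} (asx)_{∞ⁿ} (q^{2n-1})_{∞ⁿ} (q^{2n-1}/a)_{∞ⁿ} / ((s)_{∞ⁿ} (as)_{∞ⁿ} (q^{2n-1}x)_{∞ⁿ} (q^{2n-1}/(ax))_{∞ⁿ})] = ∑_{μ ∈ ℤⁿ} q^{(1−n)|μ| + 2n(μ)} s^{|μ|} · [(q^{2n-1}/(as);q)_μ (x^{-1};q)_μ (ax;q)_μ / ((as;q)_μ (q^{2n-1}x;q)_μ (q^{2n-1}/(ax);q)_μ)] · ∏_{1 ≤ i < j ≤ n} [(1 − q^{j−i+μ_i−μ_j})(1 − q^{2n−i−j+μ_i+μ_j}) / ((1 − q^{j−i})² (1 − q^{2n−i−j})²)]. -/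

import Mathlib

/-- The finite q-Pochhammer symbol `(a;q)_k = ∏_{i=0}^{k-1} (1 - a qⁱ)`. -/
noncomputable def qPoch (a q : ℂ) (k : ℕ) : ℂ :=
  ∏ i ∈ Finset.range k, (1 - a * q ^ i)

/-- The infinite q-Pochhammer symbol `(a;q)_∞ = ∏_{i=0}^{∞} (1 - a qⁱ)`. -/
noncomputable def qPochInf (a q : ℂ) : ℂ :=
  ∏' i : ℕ, (1 - a * q ^ i)

/-- The q-Pochhammer symbol extended to an arbitrary integer index:
`(a;q)_k = (a;q)_∞ / (a q^k;q)_∞`. -/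
noncomputable def qPochInt (a q : ℂ) (k : ℤ) : ℂ :=
  qPochInf a q / qPochInf (a * q ^ k) q

/-- The `t = q` specialization of the partition q-Pochhammer symbol, extended to
integer vectors: `(a;q)_μ = ∏_{i=1}^{n} (a q^{1-i};q)_{μ_i}`. -/
noncomputable def qPochIntVec (n : ℕ) (a q : ℂ) (μ : Fin n → ℤ) : ℂ :=
  ∏ i : Fin n, qPochInt (a * q ^ (-((i : ℕ) : ℤ))) q (μ i)

/-- The multiple infinite q-Pochhammer symbol `(a)_{∞ⁿ} = ∏_{i=1}^{n} (a q^{1-i};q)_∞`. -/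
noncomputable def qPochInfVec (n : ℕ) (a q : ℂ) : ℂ :=
  ∏ i : Fin n, qPochInf (a * q ^ (-((i : ℕ) : ℤ))) q

/-!
After the shift `y = μ + ρ` by the Weyl vector of type `D_n`, the double product in the summand
becomes a Weyl denominator, which is a Vandermonde determinant in the variables `q^y + q^{-y}`.
The other factors split over the coordinates of `y`, so the series is the determinant of a matrix
of one-dimensional bilateral sums. Folding `y` with `-y` turns the entries into the moments of the
polynomials `V_i(J) J^j` in `J = q^y + q^{-y}`, with `V_i` the Chebyshev polynomials of the third
kind, against the summand of Bailey's `₃ψ₃` series. A triangular change of basis replaces `V_i` and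
`J^j` by the products `(b q^y;q⁻¹)_i (b q^{-y};q⁻¹)_i` and `(c q^y;q⁻¹)_j (c q^{-y};q⁻¹)_j`, whose
moments are again `₃ψ₃` sums, with `b` and `c` shifted. Bailey's summation turns these into
`(bc;q⁻¹)_{i+j} / (bcd;q⁻¹)_{i+j}` up to factors depending on `i` or `j` only, and this Hankel
determinant is evaluated in closed form. Summability along one coordinate direction forces the
geometric ratio of the series to be less than `1` in norm, so that all the moments converge.
-/

open Finset Filter Topology Polynomial

section QPochhammer

variable {q : ℂ}

lemma qPoch_zero (a q : ℂ) : qPoch a q 0 = 1 := rfl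

lemma qPoch_succ (a q : ℂ) (k : ℕ) : qPoch a q (k + 1) = qPoch a q k * (1 - a * q ^ k) :=
  prod_range_succ _ _

lemma qPoch_add (a q : ℂ) (k l : ℕ) :
    qPoch a q (k + l) = qPoch a q k * qPoch (a * q ^ k) q l := by
  simp only [qPoch, prod_range_add, pow_add, mul_assoc]

lemma one_sub_pow_succ_ne_zero (hq1 : ‖q‖ < 1) (k : ℕ) : 1 - q ^ (k + 1) ≠ 0 := by
  intro h
  have : ‖q ^ (k + 1)‖ < 1 := by
    rw [norm_pow]
    exact pow_lt_one₀ (norm_nonneg q) hq1 k.succ_ne_zero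
  rw [← sub_eq_zero.1 h, norm_one] at this
  exact lt_irrefl _ this

lemma summable_norm_mul_pow (hq1 : ‖q‖ < 1) (a : ℂ) : Summable fun k : ℕ ↦ ‖a * q ^ k‖ := by
  simpa only [norm_mul, norm_pow] using
    (summable_geometric_of_lt_one (norm_nonneg q) hq1).mul_left ‖a‖

lemma multipliable_one_sub_mul_pow (hq1 : ‖q‖ < 1) (a : ℂ) :
    Multipliable fun k : ℕ ↦ 1 - a * q ^ k := by
  simpa only [sub_eq_add_neg] using multipliable_one_add_of_summable
    (f := fun k : ℕ ↦ -(a * q ^ k)) (by simpa only [norm_neg] using summable_norm_mul_pow hq1 a)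

lemma tendsto_qPoch (hq1 : ‖q‖ < 1) (a : ℂ) :
    Tendsto (qPoch a q) atTop (𝓝 (qPochInf a q)) :=
  (multipliable_one_sub_mul_pow hq1 a).hasProd.tendsto_prod_nat

lemma qPoch_mul_qPochInf (hq1 : ‖q‖ < 1) (a : ℂ) (k : ℕ) :
    qPoch a q k * qPochInf (a * q ^ k) q = qPochInf a q := by
  refine tendsto_nhds_unique ((tendsto_qPoch hq1 (a * q ^ k)).const_mul (qPoch a q k)) ?_
  simpa only [← qPoch_add, add_comm k] using
    (tendsto_add_atTop_iff_nat k).2 (tendsto_qPoch hq1 a)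

lemma qPochInf_ne_zero (hq1 : ‖q‖ < 1) {a : ℂ} (ha : ∀ k : ℕ, 1 - a * q ^ k ≠ 0) :
    qPochInf a q ≠ 0 := by
  have h := tprod_one_add_ne_zero_of_summable (f := fun k : ℕ ↦ -(a * q ^ k))
    (by simpa only [← sub_eq_add_neg] using ha)
    (by simpa only [norm_neg] using summable_norm_mul_pow hq1 a)
  simpa only [← sub_eq_add_neg, qPochInf] using h

lemma qPoch_inv_base (hq : q ≠ 0) (t : ℂ) (k : ℕ) :
    qPoch t q⁻¹ k = qPoch (t * q / q ^ k) q k := by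
  rw [qPoch, qPoch, ← prod_range_reflect]
  refine prod_congr rfl fun i hi ↦ ?_
  obtain ⟨l, rfl⟩ : ∃ l, k = i + l + 1 := ⟨k - i - 1, by have := mem_range.1 hi; omega⟩
  rw [show i + l + 1 - 1 - i = l by omega, inv_pow]
  field_simp
  ring

lemma prod_sub_pow (hq : q ≠ 0) (t : ℂ) (k : ℕ) :
    ∏ i ∈ range k, (t - q ^ i) = (∏ i ∈ range k, -q ^ i) * qPoch t q⁻¹ k := by
  rw [qPoch, ← prod_mul_distrib]
  refine prod_congr rfl fun i _ ↦ ?_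
  rw [inv_pow]
  field_simp
  ring

/-- The non-degeneracy condition on a parameter of a bilateral series: `t` is nonzero and is not
an integral power of `q`, so that no `(t q^r;q)_k` has a zero or a pole. -/
def IsGeneric (q t : ℂ) : Prop :=
  t ≠ 0 ∧ ∀ m : ℤ, t ≠ q ^ m

/-- The non-degeneracy condition on a parameter of a unilateral series: `(q t;q)_k` is nonzero for
every `k : ℕ`. -/
def NoPole (q t : ℂ) : Prop :=
  ∀ k : ℕ, 1 - t * q ^ (k + 1) ≠ 0

namespace IsGeneric

variable {t : ℂ}

lemma mul_zpow (ht : IsGeneric q t) (hq : q ≠ 0) (k : ℤ) : IsGeneric q (t * q ^ k) := by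
  refine ⟨mul_ne_zero ht.1 (zpow_ne_zero k hq), fun m hm ↦ ht.2 (m - k) ?_⟩
  rw [zpow_sub₀ hq, ← hm, mul_div_cancel_right₀ _ (zpow_ne_zero k hq)]

lemma mul_pow (ht : IsGeneric q t) (hq : q ≠ 0) (k : ℕ) : IsGeneric q (t * q ^ k) := by
  simpa using ht.mul_zpow hq k

lemma div_pow (ht : IsGeneric q t) (hq : q ≠ 0) (k : ℕ) : IsGeneric q (t / q ^ k) := by
  simpa [div_eq_mul_inv] using ht.mul_zpow hq (-k)

lemma inv (ht : IsGeneric q t) : IsGeneric q t⁻¹ :=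
  ⟨inv_ne_zero ht.1, fun m hm ↦ ht.2 (-m) (by rw [zpow_neg, ← hm, inv_inv])⟩

lemma one_sub_mul_zpow_ne_zero (ht : IsGeneric q t) (hq : q ≠ 0) (k : ℤ) : 1 - t * q ^ k ≠ 0 :=
  fun h ↦ (ht.mul_zpow hq k).2 0 (by rw [zpow_zero, ← sub_eq_zero.1 h])

lemma one_sub_mul_pow_ne_zero (ht : IsGeneric q t) (hq : q ≠ 0) (k : ℕ) : 1 - t * q ^ k ≠ 0 := by
  simpa using ht.one_sub_mul_zpow_ne_zero hq k

lemma noPole (ht : IsGeneric q t) (hq : q ≠ 0) : NoPole q t :=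
  fun k ↦ ht.one_sub_mul_pow_ne_zero hq (k + 1)

lemma qPoch_ne_zero (ht : IsGeneric q t) (hq : q ≠ 0) (k : ℕ) : qPoch t q k ≠ 0 :=
  prod_ne_zero_iff.2 fun i _ ↦ ht.one_sub_mul_pow_ne_zero hq i

lemma inv_base (ht : IsGeneric q t) : IsGeneric q⁻¹ t :=
  ⟨ht.1, fun m ↦ by simpa using ht.2 (-m)⟩

lemma qPochInf_ne_zero (ht : IsGeneric q t) (hq : q ≠ 0) (hq1 : ‖q‖ < 1) : qPochInf t q ≠ 0 :=
  _root_.qPochInf_ne_zero hq1 (ht.one_sub_mul_pow_ne_zero hq)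

end IsGeneric

end QPochhammer

section WellPoised

/-- The Joukowski map `z ↦ z + z⁻¹`; the summands below are polynomials in its values at the
powers of `q`, up to a weight. -/
def joukowski {K : Type*} [Field K] (z : K) : K :=
  z + z⁻¹

lemma joukowski_inv {K : Type*} [Field K] (z : K) : joukowski z⁻¹ = joukowski z := by
  rw [joukowski, joukowski, inv_inv, add_comm]

lemma norm_joukowski_le {K : Type*} [NormedField K] {z : K} (hz : z ≠ 0) (hz1 : ‖z‖ ≤ 1) :
    ‖joukowski z‖ ≤ 2 * ‖z‖⁻¹ := by
  have : 1 ≤ ‖z‖⁻¹ := (one_le_inv₀ (norm_pos_iff.2 hz)).2 hz1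
  calc ‖joukowski z‖ ≤ ‖z‖ + ‖z⁻¹‖ := norm_add_le _ _
    _ ≤ 2 * ‖z‖⁻¹ := by rw [norm_inv]; linarith

/-- `t^y (1/t;q)_y / (q t;q)_y`, the contribution of one parameter to a very-well-poised summand,
written so that it makes sense for `t = 0`. -/
noncomputable def wellPoisedFactor (q t : ℂ) (y : ℕ) : ℂ :=
  ∏ k ∈ range y, (t - q ^ k) / (1 - t * q ^ (k + 1))

/-- The summand `q^y ∏_{t = b, c, d} t^y (1/t;q)_y / (q t;q)_y` of Bailey's `₃ψ₃` series. -/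
noncomputable def baileyWeight (q b c d : ℂ) (y : ℕ) : ℂ :=
  q ^ y * (wellPoisedFactor q b y * wellPoisedFactor q c y * wellPoisedFactor q d y)

/-- The contribution of `{y, -y}` to Bailey's bilateral series. -/
noncomputable def foldedWeight (q b c d : ℂ) (y : ℕ) : ℂ :=
  if y = 0 then 1 else baileyWeight q b c d y * (1 + q ^ y)

/-- Bailey's `₃ψ₃` series, with `y` and `-y` taken together. -/
noncomputable def baileySum (q b c d : ℂ) : ℂ :=
  ∑' y : ℕ, foldedWeight q b c d y

variable {q b c d t : ℂ}

lemma wellPoisedFactor_zero (q t : ℂ) : wellPoisedFactor q t 0 = 1 := rfl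

lemma wellPoisedFactor_succ (q t : ℂ) (y : ℕ) : wellPoisedFactor q t (y + 1) =
    wellPoisedFactor q t y * ((t - q ^ y) / (1 - t * q ^ (y + 1))) :=
  prod_range_succ _ _

lemma wellPoisedFactor_succ_mul (ht : NoPole q t) (y : ℕ) :
    wellPoisedFactor q t (y + 1) * (1 - t * q ^ (y + 1)) =
      wellPoisedFactor q t y * (t - q ^ y) := by
  rw [wellPoisedFactor_succ, mul_assoc, div_mul_cancel₀ _ (ht y)]

lemma wellPoisedFactor_mul_qPoch (hq : q ≠ 0) (ht : NoPole q t) (y : ℕ) :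
    wellPoisedFactor q t y * qPoch (t * q) q y = (∏ k ∈ range y, -q ^ k) * qPoch t q⁻¹ y := by
  rw [← prod_sub_pow hq, wellPoisedFactor, qPoch, ← prod_mul_distrib]
  refine prod_congr rfl fun k _ ↦ ?_
  rw [mul_assoc t, ← pow_succ', div_mul_cancel₀ _ (ht k)]

lemma wellPoisedFactor_pow_eq_zero (q : ℂ) {N y : ℕ} (h : N < y) :
    wellPoisedFactor q (q ^ N) y = 0 :=
  prod_eq_zero (mem_range.2 h) (by rw [sub_self, zero_div])

lemma wellPoisedFactor_mul_base (hq : q ≠ 0) (ht : NoPole q t) (y : ℕ) :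
    (1 - t * q) ^ 2 * wellPoisedFactor q t y =
      (1 + (t * q) ^ 2 - t * q * joukowski (q ^ y)) * wellPoisedFactor q (t * q) y := by
  induction y with
  | zero => simp [wellPoisedFactor_zero, joukowski]; ring
  | succ y ih =>
    have h₁ := ht y
    have h₂ : 1 - t * q * q ^ (y + 1) ≠ 0 := by
      convert ht (y + 1) using 2
      ring
    rw [wellPoisedFactor_succ, wellPoisedFactor_succ, ← mul_assoc, ih]
    simp only [joukowski]
    field_simp
    ring

lemma baileyWeight_zero (q b c d : ℂ) : baileyWeight q b c d 0 = 1 := by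
  simp [baileyWeight, wellPoisedFactor_zero]

lemma baileyWeight_comm (q b c d : ℂ) (y : ℕ) :
    baileyWeight q b c d y = baileyWeight q c b d y := by
  simp only [baileyWeight, mul_comm]

lemma baileyWeight_succ (hb : NoPole q b) (hc : NoPole q c) (hd : NoPole q d) (y : ℕ) :
    baileyWeight q b c d (y + 1) *
        ((1 - b * q ^ (y + 1)) * (1 - c * q ^ (y + 1)) * (1 - d * q ^ (y + 1))) =
      q * baileyWeight q b c d y * ((b - q ^ y) * (c - q ^ y) * (d - q ^ y)) := by
  have hb := wellPoisedFactor_succ_mul hb y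
  have hc := wellPoisedFactor_succ_mul hc y
  have hd := wellPoisedFactor_succ_mul hd y
  calc _ = q ^ (y + 1) * (wellPoisedFactor q b (y + 1) * (1 - b * q ^ (y + 1)) *
        (wellPoisedFactor q c (y + 1) * (1 - c * q ^ (y + 1))) *
        (wellPoisedFactor q d (y + 1) * (1 - d * q ^ (y + 1)))) := by rw [baileyWeight]; ring
    _ = _ := by rw [hb, hc, hd, baileyWeight]; ring

lemma foldedWeight_comm (q b c d : ℂ) (y : ℕ) :
    foldedWeight q b c d y = foldedWeight q c b d y := by
  simp only [foldedWeight, baileyWeight_comm q b]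

lemma baileySum_comm (q b c d : ℂ) : baileySum q b c d = baileySum q c b d :=
  tsum_congr (foldedWeight_comm q b c d)

lemma foldedWeight_succ (q b c d : ℂ) (y : ℕ) :
    foldedWeight q b c d (y + 1) = baileyWeight q b c d (y + 1) * (1 + q ^ (y + 1)) :=
  if_neg y.succ_ne_zero

lemma foldedWeight_mul_base (hq : q ≠ 0) (hb : NoPole q b) (y : ℕ) :
    (1 - b * q) ^ 2 * foldedWeight q b c d y =
      (1 + (b * q) ^ 2 - b * q * joukowski (q ^ y)) * foldedWeight q (b * q) c d y := by
  cases y with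
  | zero => simp [foldedWeight, joukowski]; ring
  | succ y =>
    have h := wellPoisedFactor_mul_base hq hb (y + 1)
    rw [foldedWeight_succ, foldedWeight_succ, baileyWeight, baileyWeight]
    linear_combination q ^ (y + 1) * (wellPoisedFactor q c (y + 1) * wellPoisedFactor q d (y + 1)) *
      (1 + q ^ (y + 1)) * h

lemma sum_foldedWeight_telescope (hq : q ≠ 0) (hb : NoPole q b) (hc : NoPole q c)
    (hd : NoPole q d) (N : ℕ) :
    ∑ y ∈ range (N + 1), ((1 - b * c * d) *
        ((1 + b ^ 2 - b * joukowski (q ^ y)) * foldedWeight q b c d y) -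
        (1 - b) * (1 - b * c) * (1 - b * d) * foldedWeight q b c d y) =
      b * (baileyWeight q b c d N * (q ^ N)⁻¹) * ((b - q ^ N) * (c - q ^ N) * (d - q ^ N)) := by
  induction N with
  | zero => simp [foldedWeight, baileyWeight_zero, joukowski]; ring
  | succ N ih =>
    have hz : q ^ N ≠ 0 := pow_ne_zero N hq
    have hstep := baileyWeight_succ hb hc hd N
    have hW : b * (baileyWeight q b c d N * (q ^ N)⁻¹) *
          ((b - q ^ N) * (c - q ^ N) * (d - q ^ N)) =
        b * (baileyWeight q b c d (N + 1) * (q ^ (N + 1))⁻¹) *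
          ((1 - b * q ^ (N + 1)) * (1 - c * q ^ (N + 1)) * (1 - d * q ^ (N + 1))) := by
      rw [pow_succ] at hstep ⊢
      field_simp
      linear_combination -b * hstep
    rw [sum_range_succ, ih, hW, foldedWeight_succ, joukowski]
    have hZ : q ^ (N + 1) ≠ 0 := pow_ne_zero _ hq
    field_simp
    ring

end WellPoised

section Convergence

lemma summable_prod_range_of_tendsto {K : Type*} [NormedField K] [CompleteSpace K] {r : ℕ → K}
    {L : K} (hr : Tendsto r atTop (𝓝 L)) (hL : ‖L‖ < 1) :
    Summable fun n ↦ ∏ k ∈ range n, r k := by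
  obtain ⟨ρ, hLρ, hρ⟩ := exists_between hL
  refine summable_of_ratio_norm_eventually_le hρ ?_
  filter_upwards [hr.norm.eventually_le_const hLρ] with n hn
  rw [prod_range_succ, norm_mul, mul_comm]
  exact mul_le_mul_of_nonneg_right hn (norm_nonneg _)

variable {q b c d : ℂ}

lemma tendsto_wellPoisedFactor_ratio (hq1 : ‖q‖ < 1) (t : ℂ) :
    Tendsto (fun k : ℕ ↦ (t - q ^ k) / (1 - t * q ^ (k + 1))) atTop (𝓝 t) := by
  have h := tendsto_pow_atTop_nhds_zero_of_norm_lt_one hq1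
  have h' := ((tendsto_add_atTop_iff_nat 1).2 h).const_mul t |>.const_sub 1
  simpa [Pi.div_def] using (h.const_sub t).div h' (by simp)

lemma summable_baileyWeight_mul_pow (hq1 : ‖q‖ < 1) {τ : ℂ} (h : ‖q * b * c * d * τ‖ < 1) :
    Summable fun y ↦ baileyWeight q b c d y * τ ^ y := by
  have hr : Tendsto (fun k : ℕ ↦ q * ((b - q ^ k) / (1 - b * q ^ (k + 1)) *
      ((c - q ^ k) / (1 - c * q ^ (k + 1))) * ((d - q ^ k) / (1 - d * q ^ (k + 1)))) * τ)
      atTop (𝓝 (q * (b * c * d) * τ)) :=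
    ((((tendsto_wellPoisedFactor_ratio hq1 b).mul (tendsto_wellPoisedFactor_ratio hq1 c)).mul
      (tendsto_wellPoisedFactor_ratio hq1 d)).const_mul q).mul_const τ
  refine (summable_prod_range_of_tendsto hr (by simpa only [mul_assoc] using h)).congr fun y ↦ ?_
  simp only [baileyWeight, wellPoisedFactor, prod_mul_distrib, prod_const, card_range]

lemma summable_baileyWeight_mul_inv_pow (hq : q ≠ 0) (hq1 : ‖q‖ < 1) {K : ℕ}
    (h : ‖q * b * c * d‖ < ‖q‖ ^ K) :
    Summable fun y ↦ baileyWeight q b c d y * (q ^ y)⁻¹ ^ K := by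
  have hK : 0 < ‖q‖ ^ K := pow_pos (norm_pos_iff.2 hq) K
  refine (summable_baileyWeight_mul_pow (b := b) (c := c) (d := d) hq1
    (τ := (q ^ K)⁻¹) ?_).congr fun y ↦ ?_
  · rw [norm_mul, norm_inv, norm_pow, ← div_eq_mul_inv]
    exact (div_lt_one hK).2 h
  · rw [inv_pow, inv_pow, ← pow_mul, ← pow_mul, mul_comm K]

lemma norm_foldedWeight_le (hq1 : ‖q‖ < 1) (b c d : ℂ) (y : ℕ) :
    ‖foldedWeight q b c d y‖ ≤ 2 * ‖baileyWeight q b c d y‖ := by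
  cases y with
  | zero => simp [foldedWeight, baileyWeight_zero]
  | succ y =>
    have : ‖1 + q ^ (y + 1)‖ ≤ 2 := by
      refine (norm_add_le _ _).trans ?_
      rw [norm_one, norm_pow]
      linarith [pow_le_one₀ (n := y + 1) (norm_nonneg q) hq1.le]
    rw [foldedWeight_succ, norm_mul, mul_comm 2]
    gcongr

lemma summable_mul_joukowski_pow (hq : q ≠ 0) (hq1 : ‖q‖ < 1) {w u : ℕ → ℂ} {K r k : ℕ} {C : ℝ}
    (h : Summable fun y ↦ w y * (q ^ y)⁻¹ ^ K) (hC : 0 ≤ C)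
    (hu : ∀ y, ‖u y‖ ≤ C * ‖w y‖ * ‖q ^ y‖⁻¹ ^ r) (hk : r + k ≤ K) :
    Summable fun y ↦ u y * joukowski (q ^ y) ^ k := by
  refine Summable.of_norm_bounded (h.norm.mul_left (C * 2 ^ k)) fun y ↦ ?_
  have hy : q ^ y ≠ 0 := pow_ne_zero y hq
  have hy1 : ‖q ^ y‖ ≤ 1 := by
    rw [norm_pow]
    exact pow_le_one₀ (norm_nonneg q) hq1.le
  have hy' : 1 ≤ ‖q ^ y‖⁻¹ := (one_le_inv₀ (norm_pos_iff.2 hy)).2 hy1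
  calc ‖u y * joukowski (q ^ y) ^ k‖
      = ‖u y‖ * ‖joukowski (q ^ y)‖ ^ k := by rw [norm_mul, norm_pow]
    _ ≤ C * ‖w y‖ * ‖q ^ y‖⁻¹ ^ r * (2 * ‖q ^ y‖⁻¹) ^ k := by
        gcongr
        · exact hu y
        · exact norm_joukowski_le hy hy1
    _ = C * 2 ^ k * (‖w y‖ * ‖q ^ y‖⁻¹ ^ (r + k)) := by rw [mul_pow, pow_add]; ring
    _ ≤ C * 2 ^ k * ‖w y * (q ^ y)⁻¹ ^ K‖ := by
        rw [norm_mul, norm_pow (q ^ y)⁻¹, norm_inv]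
        gcongr

lemma summable_foldedWeight_mul_joukowski_pow (hq : q ≠ 0) (hq1 : ‖q‖ < 1) {K : ℕ}
    (h : Summable fun y ↦ baileyWeight q b c d y * (q ^ y)⁻¹ ^ K) {k : ℕ} (hk : k ≤ K) :
    Summable fun y ↦ foldedWeight q b c d y * joukowski (q ^ y) ^ k :=
  summable_mul_joukowski_pow (r := 0) hq hq1 h zero_le_two
    (fun y ↦ by simpa using norm_foldedWeight_le hq1 b c d y) (by rwa [zero_add])

end Convergence

section Bailey

variable {q b c d : ℂ}

lemma baileySum_mul_base (hq : q ≠ 0) (hq1 : ‖q‖ < 1) (hb : NoPole q b) (hc : NoPole q c)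
    (hd : NoPole q d)
    (h : Summable fun y ↦ baileyWeight q (b * q) c d y * (q ^ y)⁻¹) :
    (1 - b * c * d * q) * (1 - b * q) * baileySum q b c d =
      (1 - b * c * q) * (1 - b * d * q) * baileySum q (b * q) c d := by
  set B := b * q with hB
  have hB_pole : NoPole q B := fun k ↦ by
    convert hb (k + 1) using 2
    rw [hB]
    ring
  have hM (k : ℕ) (hk : k ≤ 1) :=
    summable_foldedWeight_mul_joukowski_pow hq hq1 (K := 1) (by simpa only [pow_one] using h) hk
  have hM₀ : Summable (foldedWeight q B c d) := by simpa using hM 0 zero_le_one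
  have hM₁ : HasSum
      (fun y ↦ (1 + B ^ 2 - B * joukowski (q ^ y)) * foldedWeight q B c d y)
      ((1 - B) ^ 2 * baileySum q b c d) := by
    rw [baileySum, ← tsum_mul_left]
    simp only [hB, foldedWeight_mul_base hq hb]
    refine Summable.hasSum ?_
    refine ((hM₀.mul_left (1 + B ^ 2)).sub ((hM 1 le_rfl).mul_left B)).congr fun y ↦ ?_
    ring
  have hlim : Tendsto (fun N ↦ B * (baileyWeight q B c d N * (q ^ N)⁻¹) *
      ((B - q ^ N) * (c - q ^ N) * (d - q ^ N))) atTop (𝓝 0) := by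
    have hpow := tendsto_pow_atTop_nhds_zero_of_norm_lt_one hq1
    simpa using (h.tendsto_atTop_zero.const_mul B).mul
      (((hpow.const_sub B).mul (hpow.const_sub c)).mul (hpow.const_sub d))
  have hsum := ((hM₁.mul_left (1 - B * c * d)).sub
    (hM₀.hasSum.mul_left ((1 - B) * (1 - B * c) * (1 - B * d)))).tendsto_sum_nat
  have key := tendsto_nhds_unique ((tendsto_add_atTop_iff_nat 1).2 hsum)
    (by simpa only [sum_foldedWeight_telescope hq hB_pole hc hd] using hlim)
  have hB1 : 1 - B ≠ 0 := by simpa [hB] using hb 0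
  refine mul_left_cancel₀ hB1 ?_
  rw [← baileySum] at key
  linear_combination key

lemma NoPole.mul_pow {t : ℂ} (ht : NoPole q t) (N : ℕ) : NoPole q (t * q ^ N) := fun k ↦ by
  convert ht (N + k) using 2
  ring

lemma NoPole.qPochInf_ne_zero {t : ℂ} (ht : NoPole q t) (hq1 : ‖q‖ < 1) :
    qPochInf (t * q) q ≠ 0 :=
  _root_.qPochInf_ne_zero hq1 fun k ↦ by
    convert ht k using 2
    ring

lemma qPoch_mul_baileySum (hq : q ≠ 0) (hq1 : ‖q‖ < 1) (hb : NoPole q b) (hc : NoPole q c)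
    (hd : NoPole q d)
    (h : ∀ k : ℕ, Summable fun y ↦ baileyWeight q (b * q ^ (k + 1)) c d y * (q ^ y)⁻¹) (N : ℕ) :
    qPoch (b * c * d * q) q N * qPoch (b * q) q N * baileySum q b c d =
      qPoch (b * c * q) q N * qPoch (b * d * q) q N * baileySum q (b * q ^ N) c d := by
  induction N with
  | zero => simp [qPoch_zero]
  | succ N ih =>
    have hstep := baileySum_mul_base hq hq1 (hb.mul_pow N) hc hd
      (by simpa only [pow_succ, mul_assoc] using h N)
    simp only [qPoch_succ]
    rw [pow_succ, ← mul_assoc b]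
    linear_combination (1 - b * c * d * q * q ^ N) * (1 - b * q * q ^ N) * ih +
      qPoch (b * c * q) q N * qPoch (b * d * q) q N * hstep

lemma qPoch_mul_baileySum_div (hq : q ≠ 0) (hq1 : ‖q‖ < 1) (hb : IsGeneric q b)
    (hc : NoPole q c) (hd : NoPole q d) {N : ℕ} (h : ‖q * b * c * d‖ < ‖q‖ ^ N) :
    qPoch b q⁻¹ N * qPoch (b * c * d) q⁻¹ N * baileySum q (b / q ^ N) c d =
      qPoch (b * c) q⁻¹ N * qPoch (b * d) q⁻¹ N * baileySum q b c d := by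
  have hqN : q ^ N ≠ 0 := pow_ne_zero N hq
  have hsum (k : ℕ) : Summable fun y ↦
      baileyWeight q (b / q ^ N * q ^ (k + 1)) c d y * (q ^ y)⁻¹ := by
    have hnorm : ‖q * (b / q ^ N * q ^ (k + 1)) * c * d‖ < ‖q‖ ^ 1 := by
      have hrw : q * (b / q ^ N * q ^ (k + 1)) * c * d = q * b * c * d / q ^ N * (q ^ k * q) := by
        ring
      have hlt : ‖q * b * c * d / q ^ N‖ < 1 := by
        rwa [norm_div, norm_pow, div_lt_one (pow_pos (norm_pos_iff.2 hq) N)]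
      have hk : ‖q ^ k * q‖ ≤ ‖q‖ := by
        rw [norm_mul, norm_pow]
        exact mul_le_of_le_one_left (norm_nonneg q) (pow_le_one₀ (norm_nonneg q) hq1.le)
      rw [hrw, norm_mul, pow_one]
      calc _ ≤ ‖q * b * c * d / q ^ N‖ * ‖q‖ := by gcongr
        _ < ‖q‖ := mul_lt_of_lt_one_left (norm_pos_iff.2 hq) hlt
    simpa only [pow_one] using summable_baileyWeight_mul_inv_pow hq hq1 hnorm
  have hchain := qPoch_mul_baileySum hq hq1 ((hb.div_pow hq N).noPole hq) hc hd hsum N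
  have hrw (t : ℂ) : qPoch (b / q ^ N * t * q) q N = qPoch (b * t) q⁻¹ N := by
    rw [qPoch_inv_base hq]
    congr 1
    ring
  have hb' : qPoch (b / q ^ N * q) q N = qPoch b q⁻¹ N := by simpa using hrw 1
  rw [mul_assoc (b / q ^ N), hrw, hrw, hrw, hb', div_mul_cancel₀ _ hqN, ← mul_assoc b] at hchain
  linear_combination hchain

lemma norm_wellPoisedFactor_le (hq1 : ‖q‖ < 1) {ρ : ℝ} (hρ : ρ ≤ 1 / 2) {t : ℂ} (ht : ‖t‖ ≤ ρ)
    (y : ℕ) : ‖wellPoisedFactor q t y‖ ≤ ∏ k ∈ range y, 2 * (ρ + ‖q‖ ^ k) := by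
  rw [wellPoisedFactor, norm_prod]
  refine prod_le_prod (fun _ _ ↦ norm_nonneg _) fun k _ ↦ ?_
  have hnum : ‖t - q ^ k‖ ≤ ρ + ‖q‖ ^ k := by
    refine (norm_sub_le _ _).trans ?_
    rw [norm_pow]
    gcongr
  have hden : 1 / 2 ≤ ‖1 - t * q ^ (k + 1)‖ := by
    have hle : ‖t * q ^ (k + 1)‖ ≤ ‖t‖ := by
      rw [norm_mul, norm_pow]
      exact mul_le_of_le_one_right (norm_nonneg t) (pow_le_one₀ (norm_nonneg q) hq1.le)
    have := norm_sub_norm_le 1 (t * q ^ (k + 1))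
    rw [norm_one] at this
    linarith
  rw [norm_div, div_le_iff₀ (by linarith)]
  nlinarith [norm_nonneg (t - q ^ k)]

lemma continuousAt_foldedWeight_zero (q c d : ℂ) (y : ℕ) :
    ContinuousAt (fun u ↦ foldedWeight q u c d y) 0 := by
  have h : ContinuousAt (fun u ↦ wellPoisedFactor q u y) 0 := by
    refine tendsto_finsetProd _ fun k _ ↦ ContinuousAt.div ?_ ?_ (by simp) <;> fun_prop
  unfold foldedWeight baileyWeight
  split_ifs <;> fun_prop

lemma tendsto_baileySum_zero (hq1 : ‖q‖ < 1) (c d : ℂ) :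
    Tendsto (fun u ↦ baileySum q u c d) (𝓝 0) (𝓝 (baileySum q 0 c d)) := by
  obtain ⟨ρ, hρ0, hρ⟩ : ∃ ρ : ℝ, 0 < ρ ∧ ρ ≤ 1 / 2 ∧ 2 * ρ * ‖q * c * d‖ < 1 := by
    have hpos : 0 < 1 + ‖q * c * d‖ := by positivity
    refine ⟨1 / 2 / (1 + ‖q * c * d‖), by positivity, div_le_self (by norm_num)
      (le_add_of_nonneg_right (norm_nonneg _)), ?_⟩
    rw [show 2 * (1 / 2 / (1 + ‖q * c * d‖)) * ‖q * c * d‖ = ‖q * c * d‖ / (1 + ‖q * c * d‖) by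
      field_simp, div_lt_one hpos]
    linarith
  set r : ℕ → ℝ := fun k ↦ 2 * (ρ + ‖q‖ ^ k) *
    ‖q * ((c - q ^ k) / (1 - c * q ^ (k + 1))) * ((d - q ^ k) / (1 - d * q ^ (k + 1)))‖ with hr
  have hr_lim : Tendsto r atTop (𝓝 (2 * ρ * ‖q * c * d‖)) := by
    have h := ((tendsto_pow_atTop_nhds_zero_of_lt_one (norm_nonneg q) hq1).const_add ρ).const_mul 2
    simpa [hr] using h.mul (((tendsto_wellPoisedFactor_ratio hq1 c).const_mul q).mul
      (tendsto_wellPoisedFactor_ratio hq1 d)).norm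
  have hr_sum : Summable fun y ↦ 2 * ∏ k ∈ range y, r k :=
    (summable_prod_range_of_tendsto hr_lim
      (by rw [Real.norm_of_nonneg (by positivity)]; exact hρ.2)).mul_left 2
  refine tendsto_tsum_of_dominated_convergence hr_sum
    (fun y ↦ continuousAt_foldedWeight_zero q c d y) ?_
  filter_upwards [Metric.closedBall_mem_nhds (0 : ℂ) hρ0] with u hu y
  refine (norm_foldedWeight_le hq1 u c d y).trans ?_
  have hu' := norm_wellPoisedFactor_le hq1 hρ.1 (mem_closedBall_zero_iff.1 hu) y
  have hrw : ∏ k ∈ range y, r k = (∏ k ∈ range y, 2 * (ρ + ‖q‖ ^ k)) *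
      ‖q ^ y * wellPoisedFactor q c y * wellPoisedFactor q d y‖ := by
    simp only [hr, prod_mul_distrib, ← norm_prod, prod_const, card_range, wellPoisedFactor]
  rw [hrw, baileyWeight, show q ^ y * (wellPoisedFactor q u y * wellPoisedFactor q c y *
    wellPoisedFactor q d y) = wellPoisedFactor q u y *
    (q ^ y * wellPoisedFactor q c y * wellPoisedFactor q d y) by ring, norm_mul]
  gcongr

lemma qPochInf_mul_baileySum (hq : q ≠ 0) (hq1 : ‖q‖ < 1) (hb : NoPole q b) (hc : NoPole q c)
    (hd : NoPole q d)
    (h : ∀ k : ℕ, Summable fun y ↦ baileyWeight q (b * q ^ (k + 1)) c d y * (q ^ y)⁻¹) :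
    qPochInf (b * c * d * q) q * qPochInf (b * q) q * baileySum q b c d =
      qPochInf (b * c * q) q * qPochInf (b * d * q) q * baileySum q 0 c d := by
  have hpow : Tendsto (fun N : ℕ ↦ b * q ^ N) atTop (𝓝 0) := by
    simpa using (tendsto_pow_atTop_nhds_zero_of_norm_lt_one hq1).const_mul b
  refine tendsto_nhds_unique
    (((tendsto_qPoch hq1 _).mul (tendsto_qPoch hq1 _)).mul_const (baileySum q b c d)) ?_
  simp only [qPoch_mul_baileySum hq hq1 hb hc hd h]
  exact ((tendsto_qPoch hq1 _).mul (tendsto_qPoch hq1 _)).mul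
    ((tendsto_baileySum_zero hq1 c d).comp hpow)

lemma baileyWeight_pow_eq_zero (q c d : ℂ) {N y : ℕ} (h : N < y) :
    baileyWeight q (q ^ N) c d y = 0 := by
  simp [baileyWeight, wellPoisedFactor_pow_eq_zero q h]

lemma baileySum_one (q c d : ℂ) : baileySum q 1 c d = 1 := by
  rw [baileySum, tsum_eq_single 0 fun y hy ↦ ?_]
  · rfl
  · have hW : baileyWeight q 1 c d y = 0 := by
      simpa using baileyWeight_pow_eq_zero q c d (N := 0) (Nat.pos_of_ne_zero hy)
    rw [foldedWeight, if_neg hy, hW, zero_mul]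

/-- Bailey's `₃ψ₃` summation, as a summation of its folded series. -/
theorem baileySum_eq (hq : q ≠ 0) (hq1 : ‖q‖ < 1) (hb : NoPole q b) (hc : NoPole q c)
    (hd : NoPole q d) (h : ‖q * b * c * d‖ < 1) :
    qPochInf (b * c * d * q) q * qPochInf (b * q) q * qPochInf (c * q) q * qPochInf (d * q) q *
        baileySum q b c d =
      qPochInf q q * qPochInf (b * c * q) q * qPochInf (b * d * q) q * qPochInf (c * d * q) q := by
  have hgen := qPochInf_mul_baileySum hq hq1 hb hc hd fun k ↦ by
    simpa only [pow_one] using summable_baileyWeight_mul_inv_pow hq hq1 (K := 1) (by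
      rw [show q * (b * q ^ (k + 1)) * c * d = q * b * c * d * q ^ k * q by ring, pow_one,
        norm_mul, norm_mul, norm_pow]
      refine mul_lt_of_lt_one_left (norm_pos_iff.2 hq) ?_
      exact mul_lt_one_of_nonneg_of_lt_one_left (norm_nonneg _) h
        (pow_le_one₀ (norm_nonneg q) hq1.le))
  have hone := qPochInf_mul_baileySum (b := 1) hq hq1
    (fun k ↦ by simpa using one_sub_pow_succ_ne_zero hq1 k) hc hd fun k ↦ by
      refine summable_of_ne_finset_zero (s := range (k + 2)) fun y hy ↦ ?_
      rw [one_mul, baileyWeight_pow_eq_zero q c d (not_lt.1 (mt mem_range.2 hy)), zero_mul]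
  simp only [one_mul, baileySum_one, mul_one] at hone
  linear_combination qPochInf (c * q) q * qPochInf (d * q) q * hgen -
    qPochInf (b * c * q) q * qPochInf (b * d * q) q * hone

end Bailey

section Determinants

variable {R : Type*} [CommRing R]

lemma prod_Ioi_eq_prod_range {M : Type*} [CommMonoid M] (n : ℕ) (f : ℕ → ℕ → M) :
    ∏ i : Fin n, ∏ j ∈ Ioi i, f i j = ∏ j ∈ range n, ∏ i ∈ range j, f i j := by
  calc ∏ i : Fin n, ∏ j ∈ Ioi i, f i j = ∏ j : Fin n, ∏ i ∈ Iio j, f i j :=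
        prod_comm' fun i j ↦ by simp
    _ = ∏ j : Fin n, ∏ i ∈ range j, f i j := prod_congr rfl fun j _ ↦ by
        rw [← Nat.Iio_eq_range, ← Fin.map_valEmbedding_Iio, prod_map]
        rfl
    _ = _ := Fin.prod_univ_eq_prod_range (fun j ↦ ∏ i ∈ range j, f i j) n

lemma det_functional_mul_left (Λ : R[X] →ₗ[R] R) {n : ℕ} (f g : Fin n → R[X])
    (hf : ∀ i, (f i).natDegree ≤ i) :
    (Matrix.of fun i j ↦ Λ (f i * g j)).det =
      (∏ i, (f i).coeff i) * (Matrix.of fun i j : Fin n ↦ Λ (X ^ (i : ℕ) * g j)).det := by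
  have hexp (i : Fin n) : f i = ∑ k : Fin n, (f i).coeff k • (X : R[X]) ^ (k : ℕ) := by
    rw [Fin.sum_univ_eq_sum_range (fun k ↦ (f i).coeff k • (X : R[X]) ^ k) n]
    simpa only [← C_mul_X_pow_eq_monomial, smul_eq_C_mul] using
      (f i).as_sum_range' n ((hf i).trans_lt i.2)
  have hmul : (Matrix.of fun i j ↦ Λ (f i * g j)) =
      (Matrix.of fun i k : Fin n ↦ (f i).coeff k) *
        Matrix.of fun i j : Fin n ↦ Λ (X ^ (i : ℕ) * g j) := by
    ext i j
    have hΛ : Λ (f i * g j) = ∑ k : Fin n, (f i).coeff k * Λ (X ^ (k : ℕ) * g j) := by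
      conv_lhs => rw [hexp i]
      simp only [sum_mul, map_sum, smul_mul_assoc, map_smul, smul_eq_mul]
    simpa only [Matrix.mul_apply, Matrix.of_apply] using hΛ
  rw [hmul, Matrix.det_mul, Matrix.det_of_isLowerTriangular]
  · rfl
  · exact fun i k hik ↦ coeff_eq_zero_of_natDegree_lt ((hf i).trans_lt hik)

lemma det_functional_mul (Λ : R[X] →ₗ[R] R) {n : ℕ} (f g : Fin n → R[X])
    (hf : ∀ i, (f i).natDegree ≤ i) (hg : ∀ i, (g i).natDegree ≤ i) :
    (Matrix.of fun i j ↦ Λ (f i * g j)).det = (∏ i, (f i).coeff i) * (∏ i, (g i).coeff i) *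
      (Matrix.of fun i j : Fin n ↦ Λ (X ^ (i : ℕ) * X ^ (j : ℕ))).det := by
  have h := det_functional_mul_left Λ g (fun i : Fin n ↦ X ^ (i : ℕ)) hg
  rw [det_functional_mul_left Λ f g hf, mul_assoc, ← h, ← Matrix.det_transpose]
  congr 3
  ext i j
  simp only [Matrix.of_apply, mul_comm]

lemma det_coeff_of_succ_eq {n : ℕ} (f : Fin (n + 1) → R[X]) (g : Fin n → R[X])
    (h : ∀ j, f j.succ = X * g j + f j.castSucc) :
    (Matrix.of fun l j : Fin (n + 1) ↦ (f j).coeff l).det =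
      (f 0).coeff 0 * (Matrix.of fun l j : Fin n ↦ (g j).coeff l).det := by
  set M : Matrix (Fin (n + 1)) (Fin (n + 1)) R :=
    Matrix.of fun l j ↦ (Fin.cases (f 0) (fun j ↦ X * g j) j : R[X]).coeff l with hM
  have hdet : (Matrix.of fun l j : Fin (n + 1) ↦ (f j).coeff l).det = M.det := by
    refine Matrix.det_eq_of_forall_col_eq_smul_add_pred (fun _ ↦ 1) (fun l ↦ by simp [hM]) ?_
    intro l j
    simp [hM, h j]
  have hrow (j : Fin n) : M 0 j.succ = 0 := by simp [hM]
  have hminor : M.submatrix Fin.succ (Fin.succAbove 0) =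
      Matrix.of fun l j : Fin n ↦ (g j).coeff l := by
    ext l j
    simp [hM, Matrix.submatrix_apply]
  rw [hdet, Matrix.det_succ_row_zero, Fin.sum_univ_succ]
  simp only [hrow, hminor, mul_zero, zero_mul, sum_const_zero, add_zero]
  simp [hM]

lemma det_vandermonde_pow (q : R) (n : ℕ) :
    (Matrix.vandermonde fun i : Fin n ↦ q ^ (i : ℕ)).det =
      ∏ r ∈ range n, ∏ k ∈ range r, -q ^ k * (1 - q ^ (r - k)) := by
  rw [Matrix.det_vandermonde, prod_Ioi_eq_prod_range n fun i j ↦ q ^ j - q ^ i]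
  refine prod_congr rfl fun r _ ↦ prod_congr rfl fun k hk ↦ ?_
  rw [neg_mul, mul_one_sub, ← pow_add, Nat.add_sub_cancel' (mem_range.1 hk).le, neg_sub]

/-- `∏_{k < j} (1 - A q^k X) ∏_{j ≤ k < N} (1 - B q^k X)`, whose value at `q^i` is
`(A;q)_{i+j} / (B;q)_{i+j}` up to a factor which does not depend on `j`. -/
noncomputable def hankelColumn (q A B : R) (N j : ℕ) : R[X] :=
  (∏ k ∈ range j, (1 - C (A * q ^ k) * X)) * ∏ k ∈ Ico j N, (1 - C (B * q ^ k) * X)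

lemma natDegree_prod_one_sub_C_mul_X_le (s : Finset ℕ) (a : ℕ → R) :
    (∏ k ∈ s, (1 - C (a k) * X)).natDegree ≤ #s := by
  refine (natDegree_prod_le _ _).trans ?_
  rw [card_eq_sum_ones]
  exact sum_le_sum fun k _ ↦ by compute_degree

lemma natDegree_hankelColumn_le (q A B : R) {N j : ℕ} (hj : j ≤ N) :
    (hankelColumn q A B N j).natDegree ≤ N := by
  have h₁ := natDegree_prod_one_sub_C_mul_X_le (range j) fun k ↦ A * q ^ k
  have h₂ := natDegree_prod_one_sub_C_mul_X_le (Ico j N) fun k ↦ B * q ^ k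
  rw [card_range] at h₁
  rw [Nat.card_Ico] at h₂
  refine natDegree_mul_le.trans ?_
  omega

lemma hankelColumn_coeff_zero (q A B : R) (N j : ℕ) : (hankelColumn q A B N j).coeff 0 = 1 := by
  simp [coeff_zero_eq_eval_zero, hankelColumn, eval_prod]

lemma hankelColumn_succ (q A B : R) {N j : ℕ} (hj : j ≤ N) :
    hankelColumn q A B (N + 1) (j + 1) =
      X * (C ((B - A) * q ^ j) * hankelColumn q A (B * q) N j) + hankelColumn q A B (N + 1) j := by
  have hshift : ∏ k ∈ Ico (j + 1) (N + 1), (1 - C (B * q ^ k) * X : R[X]) =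
      ∏ k ∈ Ico j N, (1 - C (B * q * q ^ k) * X) := by
    rw [← prod_Ico_add' (fun k ↦ (1 - C (B * q ^ k) * X : R[X])) j N 1]
    simp only [pow_succ', mul_assoc]
  rw [hankelColumn, hankelColumn, hankelColumn, prod_range_succ,
    prod_eq_prod_Ico_succ_bot (Nat.lt_succ_of_le hj), hshift]
  simp only [C_mul, C_sub]
  ring

lemma det_hankelColumn_coeff (q A : R) (N : ℕ) : ∀ B : R,
    (Matrix.of fun l j : Fin (N + 1) ↦ (hankelColumn q A B N j).coeff l).det =
      ∏ r ∈ range (N + 1), ∏ k ∈ range r, (B * q ^ k - A) * q ^ k := by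
  induction N with
  | zero => intro B; simp [hankelColumn]
  | succ N ih =>
    intro B
    have hscale : (Matrix.of fun l j : Fin (N + 1) ↦
        (C ((B - A) * q ^ (j : ℕ)) * hankelColumn q A (B * q) N j).coeff l) =
        Matrix.of fun l j : Fin (N + 1) ↦ (B - A) * q ^ (j : ℕ) *
          (Matrix.of fun l j : Fin (N + 1) ↦ (hankelColumn q A (B * q) N j).coeff l) l j := by
      ext l j
      simp only [Matrix.of_apply, coeff_C_mul]
    rw [det_coeff_of_succ_eq (fun j : Fin (N + 2) ↦ hankelColumn q A B (N + 1) j)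
      (fun j : Fin (N + 1) ↦ C ((B - A) * q ^ (j : ℕ)) * hankelColumn q A (B * q) N j)
      fun j ↦ hankelColumn_succ q A B (Nat.lt_succ_iff.1 j.2),
      hankelColumn_coeff_zero, one_mul, hscale, Matrix.det_mul_row, ih,
      Fin.prod_univ_eq_prod_range (fun j ↦ (B - A) * q ^ j), ← prod_mul_distrib,
      prod_range_succ' _ (N + 1), range_zero, prod_empty, mul_one]
    refine prod_congr rfl fun r _ ↦ ?_
    have hpow : ∏ k ∈ range r, q ^ (k + 1) = q ^ r * ∏ k ∈ range r, q ^ k := by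
      simp only [pow_succ', prod_mul_distrib, prod_const, card_range]
    simp only [prod_range_succ' _ r, prod_mul_distrib, hpow, pow_zero, mul_one, mul_assoc,
      ← pow_succ']
    ring

end Determinants

section Hankel

variable {q A B : ℂ}

lemma qPoch_self (q : ℂ) (r : ℕ) : ∏ k ∈ range r, (1 - q ^ (r - k)) = qPoch q q r := by
  rw [qPoch, ← prod_range_reflect]
  refine prod_congr rfl fun k hk ↦ ?_
  rw [← pow_succ']
  congr 2
  have := mem_range.1 hk
  omega

lemma eval_hankelColumn_mul_qPoch {N j : ℕ} (hj : j ≤ N) (i : ℕ) :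
    (hankelColumn q A B N j).eval (q ^ i) * (qPoch A q i * qPoch B q (i + j)) =
      qPoch A q (i + j) * qPoch B q (i + N) := by
  have hA : qPoch A q (i + j) = qPoch A q i * ∏ k ∈ range j, (1 - A * q ^ (i + k)) :=
    prod_range_add _ _ _
  have hB : qPoch B q (i + N) = qPoch B q (i + j) * ∏ k ∈ Ico j N, (1 - B * q ^ (i + k)) := by
    rw [qPoch, qPoch, prod_range_add, prod_range_add, mul_assoc, prod_range_mul_prod_Ico _ hj]
  have heval : (hankelColumn q A B N j).eval (q ^ i) =
      (∏ k ∈ range j, (1 - A * q ^ (i + k))) * ∏ k ∈ Ico j N, (1 - B * q ^ (i + k)) := by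
    simp only [hankelColumn, eval_mul, eval_prod, eval_sub, eval_one, eval_C, eval_X, pow_add,
      mul_assoc, mul_comm (q ^ i)]
  rw [heval, hA, hB]
  ring

theorem det_hankel_qPoch (N : ℕ) (hB : ∀ k, qPoch B q k ≠ 0) :
    (Matrix.of fun i j : Fin (N + 1) ↦ qPoch A q (i + j) / qPoch B q (i + j)).det =
      ∏ r ∈ range (N + 1), qPoch q q r * qPoch A q r / qPoch B q (N + r) *
        ∏ k ∈ range r, (A - B * q ^ k) * (q ^ k) ^ 2 := by
  have hfactor : (Matrix.of fun i j : Fin (N + 1) ↦ qPoch A q (i + j) / qPoch B q (i + j)) =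
      Matrix.of fun i j : Fin (N + 1) ↦ qPoch A q i / qPoch B q (N + i) *
        ((Matrix.vandermonde fun i : Fin (N + 1) ↦ q ^ (i : ℕ)) *
          Matrix.of fun l j : Fin (N + 1) ↦ (hankelColumn q A B N j).coeff l) i j := by
    ext i j
    have hj : (j : ℕ) ≤ N := Nat.lt_succ_iff.1 j.2
    have heval : ∑ l : Fin (N + 1), (q ^ (i : ℕ)) ^ (l : ℕ) * (hankelColumn q A B N j).coeff l =
        (hankelColumn q A B N j).eval (q ^ (i : ℕ)) := by
      rw [Fin.sum_univ_eq_sum_range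
          (fun l ↦ (q ^ (i : ℕ)) ^ l * (hankelColumn q A B N j).coeff l),
        eval_eq_sum_range' (Nat.lt_succ_of_le (natDegree_hankelColumn_le q A B hj))]
      simp only [mul_comm]
    simp only [Matrix.mul_apply, Matrix.of_apply, Matrix.vandermonde_apply, heval]
    rw [div_mul_eq_mul_div, div_eq_div_iff (hB _) (hB _), add_comm N (i : ℕ)]
    linear_combination -eval_hankelColumn_mul_qPoch (q := q) (A := A) (B := B) hj i
  rw [hfactor, Matrix.det_mul_column, Matrix.det_mul, det_vandermonde_pow,
    det_hankelColumn_coeff, Fin.prod_univ_eq_prod_range (fun r ↦ qPoch A q r / qPoch B q (N + r)),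
    ← prod_mul_distrib, ← prod_mul_distrib]
  refine prod_congr rfl fun r _ ↦ ?_
  rw [← qPoch_self, div_eq_mul_inv, div_eq_mul_inv, ← prod_mul_distrib]
  have hrw : ∏ k ∈ range r, -q ^ k * (1 - q ^ (r - k)) * ((B * q ^ k - A) * q ^ k) =
      (∏ k ∈ range r, (1 - q ^ (r - k))) * ∏ k ∈ range r, (A - B * q ^ k) * (q ^ k) ^ 2 := by
    rw [← prod_mul_distrib]
    exact prod_congr rfl fun k _ ↦ by ring
  rw [hrw]
  ring

end Hankel

section MomentFunctional

variable {R : Type*} [CommRing R]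

/-- The linear functional on polynomials which sends `X^k` to `m k`. -/
noncomputable def momentFunctional (m : ℕ → R) : R[X] →ₗ[R] R :=
  Polynomial.lsum fun k ↦ LinearMap.toSpanSingleton R R (m k)

lemma hasSum_momentFunctional [TopologicalSpace R] [IsTopologicalRing R] {α : Type*}
    {w x : α → R} {m : ℕ → R} {K : ℕ} (h : ∀ k ≤ K, HasSum (fun y ↦ w y * x y ^ k) (m k))
    {f : R[X]} (hf : f.natDegree ≤ K) :
    HasSum (fun y ↦ w y * f.eval (x y)) (momentFunctional m f) := by
  have hm : momentFunctional m f = ∑ k ∈ range (K + 1), f.coeff k * m k := by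
    rw [momentFunctional, lsum_apply, sum_over_range' _ _ (K + 1) (Nat.lt_succ_of_le hf)]
    · simp only [LinearMap.toSpanSingleton_apply, smul_eq_mul]
    · simp
  have hw (y : α) : w y * f.eval (x y) = ∑ k ∈ range (K + 1), f.coeff k * (w y * x y ^ k) := by
    rw [eval_eq_sum_range' (Nat.lt_succ_of_le hf), mul_sum]
    exact sum_congr rfl fun k _ ↦ by ring
  simp only [hm, hw]
  exact hasSum_sum fun k hk ↦ (h k (Nat.lt_succ_iff.1 (mem_range.1 hk))).mul_left _

/-- The Chebyshev polynomials of the third kind in the normalization `X = z + z⁻¹`, that is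
`(z^{-r} + z^{r+1}) / (1 + z)`. -/
noncomputable def chebyshevThird (R : Type*) [CommRing R] : ℕ → R[X]
  | 0 => 1
  | 1 => X - 1
  | r + 2 => X * chebyshevThird R (r + 1) - chebyshevThird R r

lemma natDegree_chebyshevThird_le (r : ℕ) : (chebyshevThird R r).natDegree ≤ r := by
  induction r using Nat.twoStepInduction with
  | zero => simp [chebyshevThird]
  | one =>
    rw [chebyshevThird]
    compute_degree
  | more r h₀ h₁ =>
    rw [chebyshevThird]
    have hX : (X : R[X]).natDegree ≤ 1 := natDegree_X_le
    have hmul : (X * chebyshevThird R (r + 1)).natDegree ≤ _ := natDegree_mul_le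
    refine (natDegree_sub_le _ _).trans (max_le ?_ ?_) <;> omega

lemma coeff_chebyshevThird_self (r : ℕ) : (chebyshevThird R r).coeff r = 1 := by
  induction r using Nat.twoStepInduction with
  | zero => simp [chebyshevThird]
  | one => simp [chebyshevThird, coeff_one]
  | more r _ h₁ =>
    have h := natDegree_chebyshevThird_le (R := R) r
    rw [chebyshevThird, coeff_sub, coeff_X_mul, h₁, coeff_eq_zero_of_natDegree_lt (by omega),
      sub_zero]

lemma one_add_mul_eval_chebyshevThird {K : Type*} [Field K] {z : K} (hz : z ≠ 0) (r : ℕ) :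
    (1 + z) * (chebyshevThird K r).eval (joukowski z) = (z ^ r)⁻¹ + z ^ (r + 1) := by
  induction r using Nat.twoStepInduction with
  | zero => simp [chebyshevThird]
  | one =>
    simp only [chebyshevThird, joukowski, eval_sub, eval_X, eval_one]
    field_simp
    ring
  | more r h₀ h₁ =>
    have hrec : (1 + z) * (chebyshevThird K (r + 2)).eval (joukowski z) =
        joukowski z * ((z ^ (r + 1))⁻¹ + z ^ (r + 2)) - ((z ^ r)⁻¹ + z ^ (r + 1)) := by
      rw [chebyshevThird, eval_sub, eval_mul, eval_X]
      linear_combination joukowski z * h₁ - h₀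
    rw [hrec, joukowski]
    field_simp
    ring

lemma eval_joukowski_one_chebyshevThird {K : Type*} [Field K] (r : ℕ) :
    (chebyshevThird K r).eval (joukowski 1) = 1 := by
  induction r using Nat.twoStepInduction with
  | zero => simp [chebyshevThird]
  | one => simp [chebyshevThird, joukowski]
  | more r h₀ h₁ =>
    rw [chebyshevThird, eval_sub, eval_mul, h₀, h₁, eval_X, joukowski]
    norm_num

/-- The polynomial in `J(z) = z + z⁻¹` whose value is `(b z;q)_r (b/z;q)_r`; multiplication by it
shifts the parameter `b` of the folded weight. -/
noncomputable def shiftPoly (q b : R) (r : ℕ) : R[X] :=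
  ∏ k ∈ range r, (C (1 + (b * q ^ k) ^ 2) - C (b * q ^ k) * X)

lemma natDegree_shiftPoly_factor_le (a b : R) : (C a - C b * X).natDegree ≤ 1 := by
  compute_degree

lemma natDegree_shiftPoly_le (q b : R) (r : ℕ) : (shiftPoly q b r).natDegree ≤ r := by
  refine (natDegree_prod_le _ _).trans ?_
  refine (sum_le_card_nsmul _ _ 1 fun k _ ↦ natDegree_shiftPoly_factor_le _ _).trans_eq ?_
  rw [card_range, smul_eq_mul, mul_one]

lemma coeff_shiftPoly_self (q b : R) (r : ℕ) :
    (shiftPoly q b r).coeff r = ∏ k ∈ range r, -(b * q ^ k) := by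
  have h := coeff_prod_of_natDegree_le (range r)
    (fun k ↦ C (1 + (b * q ^ k) ^ 2) - C (b * q ^ k) * X) 1
    fun k _ ↦ natDegree_shiftPoly_factor_le _ _
  rw [card_range, mul_one] at h
  rw [shiftPoly, h]
  refine prod_congr rfl fun k _ ↦ ?_
  rw [coeff_sub, coeff_C_mul, coeff_X_one, coeff_C_succ, zero_sub, mul_one]

end MomentFunctional

section Moments

variable {q b c d : ℂ}

lemma foldedWeight_mul_eval_shiftPoly (hq : q ≠ 0) (hb : IsGeneric q b) (r y : ℕ) :
    foldedWeight q b c d y * (shiftPoly q⁻¹ b r).eval (joukowski (q ^ y)) =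
      qPoch b q⁻¹ r ^ 2 * foldedWeight q (b / q ^ r) c d y := by
  induction r with
  | zero => simp [shiftPoly, qPoch_zero]
  | succ r ih =>
    have hbase : b / q ^ (r + 1) * q = b * q⁻¹ ^ r := by
      rw [pow_succ, inv_pow]
      field_simp
    have h := foldedWeight_mul_base (c := c) (d := d) hq ((hb.div_pow hq (r + 1)).noPole hq) y
    rw [hbase, show b * q⁻¹ ^ r = b / q ^ r by rw [inv_pow, div_eq_mul_inv]] at h
    rw [shiftPoly, prod_range_succ, ← shiftPoly, eval_mul, ← mul_assoc, ih, qPoch_succ, inv_pow,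
      ← div_eq_mul_inv]
    simp only [eval_sub, eval_mul, eval_C, eval_X]
    linear_combination -qPoch b q⁻¹ r ^ 2 * h

lemma foldedWeight_mul_eval_shiftPoly_mul (hq : q ≠ 0) (hb : IsGeneric q b) (hc : IsGeneric q c)
    (i j y : ℕ) :
    foldedWeight q b c d y *
        (shiftPoly q⁻¹ b i * shiftPoly q⁻¹ c j).eval (joukowski (q ^ y)) =
      (qPoch b q⁻¹ i * qPoch c q⁻¹ j) ^ 2 * foldedWeight q (b / q ^ i) (c / q ^ j) d y := by
  rw [eval_mul, ← mul_assoc, foldedWeight_mul_eval_shiftPoly hq hb, foldedWeight_comm, mul_assoc,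
    foldedWeight_mul_eval_shiftPoly hq hc, foldedWeight_comm, mul_pow, mul_assoc]

lemma qPoch_mul_baileySum_div_div (hq : q ≠ 0) (hq1 : ‖q‖ < 1) (hb : IsGeneric q b)
    (hc : IsGeneric q c) (hd : NoPole q d) {i j : ℕ} (h : ‖q * b * c * d‖ < ‖q‖ ^ (i + j)) :
    qPoch b q⁻¹ i * qPoch c q⁻¹ j * qPoch (b * c * d) q⁻¹ (i + j) *
        baileySum q (b / q ^ i) (c / q ^ j) d =
      qPoch (b * d) q⁻¹ i * qPoch (c * d) q⁻¹ j * qPoch (b * c) q⁻¹ (i + j) *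
        baileySum q b c d := by
  have hi : ‖q * b * c * d‖ < ‖q‖ ^ i :=
    h.trans_le (pow_le_pow_of_le_one (norm_nonneg q) hq1.le (Nat.le_add_right i j))
  have hj : ‖q * c * (b / q ^ i) * d‖ < ‖q‖ ^ j := by
    have hqi : 0 < ‖q‖ ^ i := pow_pos (norm_pos_iff.2 hq) i
    rw [show q * c * (b / q ^ i) * d = q * b * c * d / q ^ i by ring, norm_div, norm_pow,
      div_lt_iff₀ hqi, ← pow_add, add_comm]
    exact h
  have h₁ := qPoch_mul_baileySum_div hq hq1 hb (hc.noPole hq) hd hi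
  have h₂ := qPoch_mul_baileySum_div hq hq1 hc ((hb.div_pow hq i).noPole hq) hd hj
  rw [baileySum_comm q (c / q ^ j), baileySum_comm q c,
    show c * (b / q ^ i) * d = b * c * d * q⁻¹ ^ i by rw [inv_pow]; ring,
    show c * (b / q ^ i) = b * c * q⁻¹ ^ i by rw [inv_pow]; ring] at h₂
  rw [qPoch_add, qPoch_add]
  linear_combination qPoch b q⁻¹ i * qPoch (b * c * d) q⁻¹ i * h₂ +
    qPoch (b * c * q⁻¹ ^ i) q⁻¹ j * qPoch (c * d) q⁻¹ j * h₁

/-- The linear functional `f ↦ ∑_y M(y) f(J(q^y))`, where `M` is the folded weight. -/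
noncomputable def baileyFunctional (q b c d : ℂ) : ℂ[X] →ₗ[ℂ] ℂ :=
  momentFunctional fun k ↦ ∑' y : ℕ, foldedWeight q b c d y * joukowski (q ^ y) ^ k

lemma hasSum_baileyFunctional (hq : q ≠ 0) (hq1 : ‖q‖ < 1) {K : ℕ}
    (h : ‖q * b * c * d‖ < ‖q‖ ^ K) {f : ℂ[X]} (hf : f.natDegree ≤ K) :
    HasSum (fun y : ℕ ↦ foldedWeight q b c d y * f.eval (joukowski (q ^ y)))
      (baileyFunctional q b c d f) :=
  hasSum_momentFunctional (fun _ hk ↦ (summable_foldedWeight_mul_joukowski_pow hq hq1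
    (summable_baileyWeight_mul_inv_pow hq hq1 h) hk).hasSum) hf

lemma baileyFunctional_shiftPoly_mul (hq : q ≠ 0) (hq1 : ‖q‖ < 1) (hb : IsGeneric q b)
    (hc : IsGeneric q c) (hd : NoPole q d) {i j : ℕ} (h : ‖q * b * c * d‖ < ‖q‖ ^ (i + j)) :
    qPoch (b * c * d) q⁻¹ (i + j) *
        baileyFunctional q b c d (shiftPoly q⁻¹ b i * shiftPoly q⁻¹ c j) =
      (qPoch b q⁻¹ i * qPoch (b * d) q⁻¹ i) * (qPoch c q⁻¹ j * qPoch (c * d) q⁻¹ j) *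
        qPoch (b * c) q⁻¹ (i + j) * baileySum q b c d := by
  have hdeg : (shiftPoly q⁻¹ b i * shiftPoly q⁻¹ c j).natDegree ≤ i + j :=
    natDegree_mul_le_of_le (natDegree_shiftPoly_le _ _ _) (natDegree_shiftPoly_le _ _ _)
  rw [← (hasSum_baileyFunctional hq hq1 h hdeg).tsum_eq,
    tsum_congr (foldedWeight_mul_eval_shiftPoly_mul hq hb hc i j), tsum_mul_left, ← baileySum]
  linear_combination qPoch b q⁻¹ i * qPoch c q⁻¹ j *
    qPoch_mul_baileySum_div_div hq hq1 hb hc hd h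

lemma det_baileyFunctional_shiftPoly (hq : q ≠ 0) (hq1 : ‖q‖ < 1) (hb : IsGeneric q b)
    (hc : IsGeneric q c) (hd : NoPole q d) (hbcd : IsGeneric q (b * c * d)) {N : ℕ}
    (h : ‖q * b * c * d‖ < ‖q‖ ^ (2 * N)) :
    (Matrix.of fun i j : Fin (N + 1) ↦
        baileyFunctional q b c d (shiftPoly q⁻¹ b i * shiftPoly q⁻¹ c j)).det =
      baileySum q b c d ^ (N + 1) * ∏ r ∈ range (N + 1),
        (qPoch b q⁻¹ r * qPoch (b * d) q⁻¹ r) * (qPoch c q⁻¹ r * qPoch (c * d) q⁻¹ r) *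
          (qPoch q⁻¹ q⁻¹ r * qPoch (b * c) q⁻¹ r / qPoch (b * c * d) q⁻¹ (N + r) *
            ∏ k ∈ range r, (b * c - b * c * d * q⁻¹ ^ k) * (q⁻¹ ^ k) ^ 2) := by
  have hpoch (k : ℕ) : qPoch (b * c * d) q⁻¹ k ≠ 0 :=
    hbcd.inv_base.qPoch_ne_zero (inv_ne_zero hq) k
  have hentry : (Matrix.of fun i j : Fin (N + 1) ↦
        baileyFunctional q b c d (shiftPoly q⁻¹ b i * shiftPoly q⁻¹ c j)) =
      Matrix.of fun i j : Fin (N + 1) ↦ baileySum q b c d *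
        (qPoch b q⁻¹ i * qPoch (b * d) q⁻¹ i) *
        (Matrix.of fun i j : Fin (N + 1) ↦ (qPoch c q⁻¹ j * qPoch (c * d) q⁻¹ j) *
          (Matrix.of fun i j : Fin (N + 1) ↦
            qPoch (b * c) q⁻¹ (i + j) / qPoch (b * c * d) q⁻¹ (i + j)) i j) i j := by
    ext i j
    have hij : ‖q * b * c * d‖ < ‖q‖ ^ (i + j : ℕ) :=
      h.trans_le (pow_le_pow_of_le_one (norm_nonneg q) hq1.le (by omega))
    refine mul_left_cancel₀ (hpoch (i + j)) ?_
    simp only [Matrix.of_apply, baileyFunctional_shiftPoly_mul hq hq1 hb hc hd hij]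
    linear_combination -(qPoch b q⁻¹ i * qPoch (b * d) q⁻¹ i * (qPoch c q⁻¹ j *
      qPoch (c * d) q⁻¹ j) * baileySum q b c d) *
      mul_div_cancel₀ (qPoch (b * c) q⁻¹ (i + j)) (hpoch (i + j))
  rw [hentry, Matrix.det_mul_column, Matrix.det_mul_row, det_hankel_qPoch N hpoch,
    prod_mul_distrib, prod_const, card_univ, Fintype.card_fin,
    Fin.prod_univ_eq_prod_range (fun r ↦ qPoch b q⁻¹ r * qPoch (b * d) q⁻¹ r),
    Fin.prod_univ_eq_prod_range (fun r ↦ qPoch c q⁻¹ r * qPoch (c * d) q⁻¹ r),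
    mul_assoc, ← prod_mul_distrib, ← prod_mul_distrib]
  simp only [mul_assoc]

theorem det_baileyFunctional_chebyshevThird (hq : q ≠ 0) (hq1 : ‖q‖ < 1) (hb : IsGeneric q b)
    (hc : IsGeneric q c) (hd : NoPole q d) (hbcd : IsGeneric q (b * c * d)) {N : ℕ}
    (h : ‖q * b * c * d‖ < ‖q‖ ^ (2 * N)) :
    (Matrix.of fun i j : Fin (N + 1) ↦
        baileyFunctional q b c d (chebyshevThird ℂ i * X ^ (j : ℕ))).det =
      baileySum q b c d ^ (N + 1) * ∏ r ∈ range (N + 1),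
        qPoch q⁻¹ q⁻¹ r * (qPoch b q⁻¹ r * qPoch c q⁻¹ r * qPoch d q⁻¹ r) *
          (qPoch (b * c) q⁻¹ r * qPoch (b * d) q⁻¹ r * qPoch (c * d) q⁻¹ r) /
          qPoch (b * c * d) q⁻¹ (N + r) := by
  have hleft := det_functional_mul (baileyFunctional q b c d)
    (fun i : Fin (N + 1) ↦ shiftPoly q⁻¹ b i) (fun j ↦ shiftPoly q⁻¹ c j)
    (fun i ↦ natDegree_shiftPoly_le _ _ _) fun j ↦ natDegree_shiftPoly_le _ _ _
  have hcoeff (t : ℂ) (ht : t ≠ 0) (r : ℕ) : ∏ k ∈ range r, -(t * q⁻¹ ^ k) ≠ 0 :=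
    prod_ne_zero_iff.2 fun k _ ↦ neg_ne_zero.2 (mul_ne_zero ht (pow_ne_zero k (inv_ne_zero hq)))
  have hcancel (r : ℕ) : ∏ k ∈ range r, (b * c - b * c * d * q⁻¹ ^ k) * (q⁻¹ ^ k) ^ 2 =
      (∏ k ∈ range r, -(b * q⁻¹ ^ k)) * (∏ k ∈ range r, -(c * q⁻¹ ^ k)) * qPoch d q⁻¹ r := by
    rw [qPoch, ← prod_mul_distrib, ← prod_mul_distrib]
    exact prod_congr rfl fun k _ ↦ by ring
  rw [det_baileyFunctional_shiftPoly hq hq1 hb hc hd hbcd h] at hleft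
  simp only [coeff_shiftPoly_self, hcancel] at hleft
  rw [Fin.prod_univ_eq_prod_range fun r ↦ ∏ k ∈ range r, -(b * q⁻¹ ^ k),
    Fin.prod_univ_eq_prod_range fun r ↦ ∏ k ∈ range r, -(c * q⁻¹ ^ k), ← prod_mul_distrib] at hleft
  rw [det_functional_mul_left _ _ _ fun i ↦ natDegree_chebyshevThird_le _]
  simp only [coeff_chebyshevThird_self, prod_const_one, one_mul]
  refine mul_left_cancel₀ (prod_ne_zero_iff.2 fun r _ ↦
    mul_ne_zero (hcoeff b hb.1 r) (hcoeff c hc.1 r)) (hleft.symm.trans ?_)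
  rw [mul_left_comm, ← prod_mul_distrib]
  congr 1
  exact prod_congr rfl fun r _ ↦ by ring

end Moments

section Bilateral

variable {q b c d t : ℂ}

lemma qPochInt_zero (hq : q ≠ 0) (hq1 : ‖q‖ < 1) (ht : IsGeneric q t) : qPochInt t q 0 = 1 := by
  rw [qPochInt, zpow_zero, mul_one, div_self (ht.qPochInf_ne_zero hq hq1)]

lemma qPochInt_ne_zero (hq : q ≠ 0) (hq1 : ‖q‖ < 1) (ht : IsGeneric q t) (y : ℤ) :
    qPochInt t q y ≠ 0 :=
  div_ne_zero (ht.qPochInf_ne_zero hq hq1) ((ht.mul_zpow hq y).qPochInf_ne_zero hq hq1)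

lemma qPochInt_add (hq : q ≠ 0) (hq1 : ‖q‖ < 1) (ht : IsGeneric q t) (y m : ℤ) :
    qPochInt t q (y + m) = qPochInt t q y * qPochInt (t * q ^ y) q m := by
  rw [qPochInt, qPochInt, qPochInt, zpow_add₀ hq, ← mul_assoc, mul_comm,
    div_mul_div_cancel₀ ((ht.mul_zpow hq y).qPochInf_ne_zero hq hq1), mul_comm]

lemma qPochInt_one (hq : q ≠ 0) (hq1 : ‖q‖ < 1) (ht : IsGeneric q t) : qPochInt t q 1 = 1 - t := by
  have h := qPoch_mul_qPochInf hq1 t 1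
  rw [qPoch_succ, qPoch_zero, one_mul, pow_zero, mul_one, pow_one] at h
  rw [qPochInt, zpow_one, ← h, mul_div_cancel_right₀]
  simpa using (ht.mul_pow hq 1).qPochInf_ne_zero hq hq1

/-- The extension `t^y (1/t;q)_y / (q t;q)_y` of `wellPoisedFactor` to integral `y`. -/
noncomputable def bilateralFactor (q t : ℂ) (y : ℤ) : ℂ :=
  t ^ y * qPochInt t⁻¹ q y / qPochInt (t * q) q y

/-- The extension of `baileyWeight` to integral `y`. -/
noncomputable def bilateralWeight (q b c d : ℂ) (y : ℤ) : ℂ :=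
  q ^ y * (bilateralFactor q b y * bilateralFactor q c y * bilateralFactor q d y)

lemma IsGeneric.mul_base (ht : IsGeneric q t) (hq : q ≠ 0) : IsGeneric q (t * q) := by
  simpa using ht.mul_pow hq 1

lemma bilateralFactor_ne_zero (hq : q ≠ 0) (hq1 : ‖q‖ < 1) (ht : IsGeneric q t) (y : ℤ) :
    bilateralFactor q t y ≠ 0 :=
  div_ne_zero (mul_ne_zero (zpow_ne_zero y ht.1) (qPochInt_ne_zero hq hq1 ht.inv y))
    (qPochInt_ne_zero hq hq1 (ht.mul_base hq) y)

lemma bilateralFactor_zero (hq : q ≠ 0) (hq1 : ‖q‖ < 1) (ht : IsGeneric q t) :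
    bilateralFactor q t 0 = 1 := by
  rw [bilateralFactor, qPochInt_zero hq hq1 ht.inv, qPochInt_zero hq hq1 (ht.mul_base hq)]
  simp

lemma bilateralFactor_add (hq : q ≠ 0) (hq1 : ‖q‖ < 1) (ht : IsGeneric q t) (y m : ℤ) :
    bilateralFactor q t (y + m) = bilateralFactor q t y *
      (t ^ m * qPochInt (t⁻¹ * q ^ y) q m / qPochInt (t * q * q ^ y) q m) := by
  rw [bilateralFactor, bilateralFactor, zpow_add₀ ht.1, qPochInt_add hq hq1 ht.inv,
    qPochInt_add hq hq1 (ht.mul_base hq), div_mul_div_comm]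
  ring

lemma bilateralFactor_succ_mul (hq : q ≠ 0) (hq1 : ‖q‖ < 1) (ht : IsGeneric q t) (y : ℤ) :
    bilateralFactor q t (y + 1) * (1 - t * q ^ (y + 1)) = bilateralFactor q t y * (t - q ^ y) := by
  have h₁ : 1 - t * q * q ^ y ≠ 0 := (ht.mul_base hq).one_sub_mul_zpow_ne_zero hq y
  rw [bilateralFactor_add hq hq1 ht, qPochInt_one hq hq1 (ht.inv.mul_zpow hq y),
    qPochInt_one hq hq1 ((ht.mul_base hq).mul_zpow hq y), zpow_one, zpow_add_one₀ hq,
    show t * (q ^ y * q) = t * q * q ^ y by ring, mul_assoc, div_mul_cancel₀ _ h₁,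
    mul_one_sub, mul_inv_cancel_left₀ ht.1]

lemma bilateralFactor_natCast (hq : q ≠ 0) (hq1 : ‖q‖ < 1) (ht : IsGeneric q t) (y : ℕ) :
    bilateralFactor q t y = wellPoisedFactor q t y := by
  induction y with
  | zero => exact bilateralFactor_zero hq hq1 ht
  | succ y ih =>
    refine mul_right_cancel₀ (ht.noPole hq y) ?_
    rw [wellPoisedFactor_succ_mul (ht.noPole hq), ← ih]
    exact_mod_cast bilateralFactor_succ_mul hq hq1 ht y

lemma bilateralFactor_neg_natCast (hq : q ≠ 0) (hq1 : ‖q‖ < 1) (ht : IsGeneric q t) (y : ℕ) :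
    bilateralFactor q t (-y) = q ^ y * wellPoisedFactor q t y := by
  induction y with
  | zero => simpa [wellPoisedFactor_zero] using bilateralFactor_zero hq hq1 ht
  | succ y ih =>
    have hrec := bilateralFactor_succ_mul hq hq1 ht (-(y + 1 : ℕ))
    have hy : q ^ y ≠ 0 := pow_ne_zero y hq
    rw [show -((y + 1 : ℕ) : ℤ) + 1 = -(y : ℤ) by push_cast; ring, ih, zpow_neg, zpow_neg,
      zpow_natCast, zpow_natCast, pow_succ] at hrec
    refine mul_right_cancel₀ (ht.noPole hq y) ?_
    rw [mul_assoc (q ^ (y + 1)), wellPoisedFactor_succ_mul (ht.noPole hq), pow_succ]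
    field_simp at hrec
    linear_combination hrec

lemma bilateralWeight_ne_zero (hq : q ≠ 0) (hq1 : ‖q‖ < 1) (hb : IsGeneric q b)
    (hc : IsGeneric q c) (hd : IsGeneric q d) (y : ℤ) : bilateralWeight q b c d y ≠ 0 :=
  mul_ne_zero (zpow_ne_zero y hq) (mul_ne_zero (mul_ne_zero (bilateralFactor_ne_zero hq hq1 hb y)
    (bilateralFactor_ne_zero hq hq1 hc y)) (bilateralFactor_ne_zero hq hq1 hd y))

lemma bilateralWeight_natCast (hq : q ≠ 0) (hq1 : ‖q‖ < 1) (hb : IsGeneric q b)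
    (hc : IsGeneric q c) (hd : IsGeneric q d) (y : ℕ) :
    bilateralWeight q b c d y = baileyWeight q b c d y := by
  rw [bilateralWeight, bilateralFactor_natCast hq hq1 hb, bilateralFactor_natCast hq hq1 hc,
    bilateralFactor_natCast hq hq1 hd, zpow_natCast, baileyWeight]

lemma bilateralWeight_neg_natCast (hq : q ≠ 0) (hq1 : ‖q‖ < 1) (hb : IsGeneric q b)
    (hc : IsGeneric q c) (hd : IsGeneric q d) (y : ℕ) :
    bilateralWeight q b c d (-y) = q ^ y * baileyWeight q b c d y := by
  have hy : q ^ y ≠ 0 := pow_ne_zero y hq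
  rw [bilateralWeight, bilateralFactor_neg_natCast hq hq1 hb,
    bilateralFactor_neg_natCast hq hq1 hc, bilateralFactor_neg_natCast hq hq1 hd, zpow_neg,
    zpow_natCast, baileyWeight]
  field_simp

lemma hasSum_int_of_hasSum_fold {E : Type*} [AddCommGroup E] [TopologicalSpace E]
    [IsTopologicalAddGroup E] [T2Space E] {f : ℤ → E} {g : ℕ → E} {a : E} (hg : HasSum g a)
    (hzero : g 0 = f 0) (hsucc : ∀ n : ℕ, g (n + 1) = f (n + 1) + f (-(n + 1)))
    (hpos : Summable fun n : ℕ ↦ f n) (hneg : Summable fun n : ℕ ↦ f (-n)) : HasSum f a := by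
  have hfold : HasSum g (∑' n : ℕ, f n + ∑' n : ℕ, f (-n) - f 0) := by
    convert (hpos.hasSum.add hneg.hasSum).sub (hasSum_ite_eq 0 (f 0)) using 2 with n
    cases n with
    | zero => simp [hzero]
    | succ n => simp [hsucc]
  rw [hg.unique hfold]
  exact hpos.hasSum.of_nat_of_neg hneg.hasSum

lemma hasSum_bilateralWeight (hq : q ≠ 0) (hq1 : ‖q‖ < 1) (hb : IsGeneric q b)
    (hc : IsGeneric q c) (hd : IsGeneric q d) {K r j : ℕ} (hK : r + j ≤ K)
    (h : ‖q * b * c * d‖ < ‖q‖ ^ K) :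
    HasSum (fun y : ℤ ↦ (q ^ y)⁻¹ ^ r * bilateralWeight q b c d y * joukowski (q ^ y) ^ j)
      (baileyFunctional q b c d (chebyshevThird ℂ r * X ^ j)) := by
  have hW := summable_baileyWeight_mul_inv_pow hq hq1 h
  have hpos (y : ℕ) : (q ^ (y : ℤ))⁻¹ ^ r * bilateralWeight q b c d y *
      joukowski (q ^ (y : ℤ)) ^ j =
      (q ^ y)⁻¹ ^ r * baileyWeight q b c d y * joukowski (q ^ y) ^ j := by
    rw [bilateralWeight_natCast hq hq1 hb hc hd, zpow_natCast]
  have hneg (y : ℕ) : (q ^ (-y : ℤ))⁻¹ ^ r * bilateralWeight q b c d (-y) *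
      joukowski (q ^ (-y : ℤ)) ^ j =
      (q ^ y) ^ (r + 1) * baileyWeight q b c d y * joukowski (q ^ y) ^ j := by
    rw [bilateralWeight_neg_natCast hq hq1 hb hc hd, zpow_neg, zpow_natCast, joukowski_inv,
      inv_inv]
    ring
  have hdeg : (chebyshevThird ℂ r * X ^ j).natDegree ≤ K :=
    (natDegree_mul_le_of_le (natDegree_chebyshevThird_le r) (natDegree_X_pow_le j)).trans hK
  refine hasSum_int_of_hasSum_fold (hasSum_baileyFunctional hq hq1 h hdeg) ?_ (fun y ↦ ?_) ?_ ?_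
  · have hpos' := hpos 0
    push_cast at hpos'
    rw [hpos', eval_mul, pow_zero, eval_joukowski_one_chebyshevThird, foldedWeight,
      baileyWeight_zero]
    simp
  · have hcheb := one_add_mul_eval_chebyshevThird (pow_ne_zero (y + 1) hq) r
    have hpos' := hpos (y + 1)
    have hneg' := hneg (y + 1)
    push_cast at hpos' hneg'
    rw [hpos', hneg', foldedWeight_succ, eval_mul, eval_pow, eval_X, inv_pow]
    linear_combination baileyWeight q b c d (y + 1) * joukowski (q ^ (y + 1)) ^ j * hcheb
  · refine (summable_mul_joukowski_pow hq hq1 hW zero_le_one (fun y ↦ ?_) hK).congr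
      fun y ↦ (hpos y).symm
    rw [norm_mul, norm_pow, norm_inv, one_mul, mul_comm]
  · refine (summable_mul_joukowski_pow hq hq1 hW zero_le_one (fun y ↦ ?_) hK).congr
      fun y ↦ (hneg y).symm
    have hq_le : ‖q ^ y‖ ≤ 1 := by simpa using pow_le_one₀ (norm_nonneg q) hq1.le
    calc ‖(q ^ y) ^ (r + 1) * baileyWeight q b c d y‖
      _ = ‖q ^ y‖ ^ (r + 1) * ‖baileyWeight q b c d y‖ := by rw [norm_mul, norm_pow]
      _ ≤ 1 * ‖baileyWeight q b c d y‖ * ‖q ^ y‖⁻¹ ^ r := by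
        rw [one_mul, mul_comm]
        gcongr
        exact (pow_le_one₀ (norm_nonneg _) hq_le).trans
          (one_le_pow₀ ((one_le_inv₀ (norm_pos_iff.mpr (pow_ne_zero y hq))).mpr hq_le))

end Bilateral

section LatticeSum

variable {R α : Type*} [NormedCommRing R] {n : ℕ}

lemma summable_norm_prod_apply {f : Fin n → α → R} (hf : ∀ i, Summable fun x ↦ ‖f i x‖) :
    Summable fun y : Fin n → α ↦ ‖∏ i, f i (y i)‖ := by
  induction n with
  | zero => exact .of_finite
  | succ n ih =>
    have h := (hf 0).mul_norm (ih (f := fun i ↦ f i.succ) fun i ↦ hf i.succ)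
    rw [← (Fin.consEquiv fun _ : Fin (n + 1) ↦ α).summable_iff]
    refine h.congr fun p ↦ ?_
    simp [Fin.prod_univ_succ, Fin.consEquiv]

lemma hasSum_prod_apply [CompleteSpace R] {f : Fin n → α → R} {a : Fin n → R}
    (hf : ∀ i, HasSum (f i) (a i)) (hf' : ∀ i, Summable fun x ↦ ‖f i x‖) :
    HasSum (fun y : Fin n → α ↦ ∏ i, f i (y i)) (∏ i, a i) := by
  induction n with
  | zero => simp
  | succ n ih =>
    have htail := ih (f := fun i ↦ f i.succ) (fun i ↦ hf i.succ) fun i ↦ hf' i.succ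
    have htail' := summable_norm_prod_apply (f := fun i ↦ f i.succ) fun i ↦ hf' i.succ
    have h := (hf 0).mul htail ((hf' 0).mul_norm htail').of_norm
    rw [Fin.prod_univ_succ, ← (Fin.consEquiv fun _ : Fin (n + 1) ↦ α).hasSum_iff]
    refine h.congr_fun fun p ↦ ?_
    simp [Fin.prod_univ_succ, Fin.consEquiv]

lemma hasSum_det [CompleteSpace R] {f : Fin n → Fin n → α → R} {A : Matrix (Fin n) (Fin n) R}
    (hf : ∀ i j, HasSum (f i j) (A i j)) (hf' : ∀ i j, Summable fun x ↦ ‖f i j x‖) :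
    HasSum (fun y : Fin n → α ↦ (Matrix.of fun i j ↦ f i j (y i)).det) A.det := by
  simp_rw [← A.det_transpose, ← Matrix.det_transpose (Matrix.of _), Matrix.det_apply']
  exact hasSum_sum fun σ _ ↦
    (hasSum_prod_apply (fun i ↦ hf i (σ i)) fun i ↦ hf' i (σ i)).mul_left _

lemma hasSum_prod_mul_det_vandermonde [CompleteSpace R] {w : Fin n → α → R} {u : α → R}
    {A : Matrix (Fin n) (Fin n) R}
    (hw : ∀ i j : Fin n, HasSum (fun x ↦ w i x * u x ^ (j : ℕ)) (A i j))
    (hw' : ∀ i j : Fin n, Summable fun x ↦ ‖w i x * u x ^ (j : ℕ)‖) :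
    HasSum (fun y : Fin n → α ↦
      (∏ i, w i (y i)) * (Matrix.vandermonde fun i ↦ u (y i)).det) A.det := by
  convert hasSum_det hw hw' using 2 with y
  exact (Matrix.det_mul_column _ _).symm

end LatticeSum

section WeylDenominator

variable {q : ℂ} {n : ℕ}

/-- The Weyl denominator of type `D_n` with `e^{ε_i}` specialized to `q^{y_i}`. -/
noncomputable def weylDenominator (q : ℂ) (y : Fin n → ℤ) : ℂ :=
  ∏ i, ∏ j ∈ Ioi i, ((1 - q ^ (y j - y i)) * (1 - q ^ (y i + y j)))

/-- The Weyl vector `(0, 1, …, n - 1)` of type `D_n`, in increasing order. -/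
def weylVector (n : ℕ) : Fin n → ℤ :=
  fun i ↦ i

/-- The bijection `μ ↦ (μ_n, …, μ_1) + ρ` of the lattice `ℤⁿ`. -/
def revAddWeylVector (n : ℕ) : (Fin n → ℤ) ≃ (Fin n → ℤ) :=
  (Fin.revPerm.arrowCongr (Equiv.refl ℤ)).trans (Equiv.addRight (weylVector n))

lemma revAddWeylVector_apply (μ : Fin n → ℤ) (i : Fin n) :
    revAddWeylVector n μ i = μ i.rev + i := rfl

lemma prod_Ioi_comm {M : Type*} [CommMonoid M] (f : Fin n → Fin n → M) :
    ∏ i, ∏ j ∈ Ioi i, f i j = ∏ j, ∏ i ∈ Iio j, f i j :=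
  prod_comm' (by simp)

lemma prod_Ioi_rev {M : Type*} [CommMonoid M] (f : Fin n → Fin n → M) :
    ∏ i, ∏ j ∈ Ioi i, f i j = ∏ i, ∏ j ∈ Ioi i, f (Fin.rev j) (Fin.rev i) := by
  rw [prod_Ioi_comm, ← Equiv.prod_comp Fin.revPerm]
  refine prod_congr rfl fun i _ ↦ ?_
  refine prod_nbij' Fin.rev Fin.rev ?_ ?_ ?_ ?_ ?_ <;>
    simp [Fin.lt_rev_iff]

lemma weylDenominator_eq_det_vandermonde (hq : q ≠ 0) (y : Fin n → ℤ) :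
    weylDenominator q y =
      (∏ i, (q ^ y i) ^ (i : ℕ)) * (Matrix.vandermonde fun i ↦ joukowski (q ^ y i)).det := by
  have hpow : ∏ i, (q ^ y i) ^ (i : ℕ) = ∏ i, ∏ j ∈ Ioi i, q ^ y j := by
    rw [prod_Ioi_comm]
    simp
  rw [hpow, Matrix.det_vandermonde, weylDenominator, ← prod_mul_distrib]
  refine prod_congr rfl fun i _ ↦ ?_
  rw [← prod_mul_distrib]
  refine prod_congr rfl fun j _ ↦ ?_
  have hi : q ^ y i ≠ 0 := zpow_ne_zero _ hq
  have hj : q ^ y j ≠ 0 := zpow_ne_zero _ hq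
  rw [zpow_sub₀ hq, zpow_add₀ hq, joukowski, joukowski]
  field_simp
  ring

lemma weylDenominator_revAddWeylVector (q : ℂ) (μ : Fin n → ℤ) :
    weylDenominator q (revAddWeylVector n μ) = ∏ i : Fin n, ∏ j ∈ Ioi i,
      ((1 - q ^ ((j : ℤ) - i + μ i - μ j)) * (1 - q ^ (2 * (n : ℤ) - 2 - i - j + μ i + μ j))) := by
  rw [weylDenominator, prod_Ioi_rev]
  refine prod_congr rfl fun i _ ↦ prod_congr rfl fun j _ ↦ ?_
  have hrev (k : Fin n) : ((k.rev : ℕ) : ℤ) = n - 1 - k := by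
    rw [Fin.val_rev]
    omega
  simp only [revAddWeylVector_apply, Fin.rev_rev, hrev]
  congr 3 <;> ring

lemma prod_weylDenominator_quotient (q : ℂ) (μ : Fin n → ℤ) :
    ∏ i : Fin n, ∏ j ∈ Ioi i, ((1 - q ^ ((j : ℤ) - i + μ i - μ j)) *
      (1 - q ^ (2 * (n : ℤ) - 2 - i - j + μ i + μ j)) /
        ((1 - q ^ ((j : ℤ) - i)) ^ 2 * (1 - q ^ (2 * (n : ℤ) - 2 - i - j)) ^ 2)) =
      weylDenominator q (revAddWeylVector n μ) / weylDenominator q (weylVector n) ^ 2 := by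
  have hzero : weylVector n = revAddWeylVector n 0 := by
    ext i
    simp [revAddWeylVector_apply, weylVector]
  rw [hzero, weylDenominator_revAddWeylVector, weylDenominator_revAddWeylVector]
  simp only [prod_div_distrib, ← mul_pow, prod_pow, Pi.zero_apply, add_zero, sub_zero]

lemma weylDenominator_weylVector (q : ℂ) (n : ℕ) : weylDenominator q (weylVector n) =
    ∏ j ∈ range n, ∏ i ∈ range j, ((1 - q ^ (j - i)) * (1 - q ^ (i + j))) := by
  rw [weylDenominator, ← prod_Ioi_eq_prod_range]
  refine prod_congr rfl fun i _ ↦ prod_congr rfl fun j hj ↦ ?_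
  have hij : (i : ℕ) ≤ j := (mem_Ioi.mp hj).le
  rw [weylVector, weylVector, ← Nat.cast_sub hij, ← Nat.cast_add, zpow_natCast, zpow_natCast]

lemma weylDenominator_weylVector_ne_zero (hq1 : ‖q‖ < 1) (n : ℕ) :
    weylDenominator q (weylVector n) ≠ 0 := by
  have hpow {k : ℕ} (hk : 0 < k) : 1 - q ^ k ≠ 0 := by
    obtain ⟨k, rfl⟩ := Nat.exists_eq_add_of_lt hk
    simpa using one_sub_pow_succ_ne_zero hq1 k
  rw [weylDenominator_weylVector]
  refine prod_ne_zero_iff.mpr fun j _ ↦ prod_ne_zero_iff.mpr fun i hi ↦ ?_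
  have hij := mem_range.mp hi
  exact mul_ne_zero (hpow (by omega)) (hpow (by omega))

lemma prod_qPoch_mul_prod_one_sub_pow_add_sq (q : ℂ) (N : ℕ) :
    (∏ i ∈ range N, (1 + q ^ (i + 1))) * (∏ r ∈ range (N + 1), qPoch q q r) *
        (∏ j ∈ range (N + 1), ∏ i ∈ range j, (1 - q ^ (i + j))) ^ 2 =
      ∏ r ∈ range (N + 1), qPoch q q (N + r) := by
  induction N with
  | zero => simp [qPoch_zero]
  | succ N ih =>
    have hfactor (r : ℕ) :
        qPoch q q (N + 1 + r) = qPoch q q (N + r) * (1 - q ^ (r + (N + 1))) := by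
      rw [Nat.add_right_comm, qPoch_succ]
      ring
    have hlast : qPoch (q * q ^ (N + 1)) q (N + 1) =
        (1 + q ^ (N + 1)) * ∏ i ∈ range (N + 1), (1 - q ^ (i + (N + 1))) := by
      rw [qPoch_succ, prod_range_succ', qPoch]
      have (i : ℕ) : 1 - q * q ^ (N + 1) * q ^ i = 1 - q ^ (i + 1 + (N + 1)) := by ring
      simp_rw [this]
      ring
    rw [prod_range_succ _ N, prod_range_succ _ (N + 1), prod_range_succ _ (N + 1),
      prod_range_succ _ (N + 1), qPoch_add _ _ (N + 1) (N + 1), hlast, mul_pow,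
      prod_congr rfl fun r _ ↦ hfactor r, prod_mul_distrib, ← ih]
    ring

lemma prod_one_add_mul_weylDenominator_sq (q : ℂ) (N : ℕ) :
    (∏ i ∈ range N, (1 + q ^ (i + 1))) * weylDenominator q (weylVector (N + 1)) ^ 2 =
      ∏ r ∈ range (N + 1), (qPoch q q r * qPoch q q (N + r)) := by
  simp only [weylDenominator_weylVector, prod_mul_distrib, qPoch_self,
    ← prod_qPoch_mul_prod_one_sub_pow_add_sq]
  ring

end WeylDenominator

section LatticeWeight

variable {q b c d t : ℂ} {n : ℕ}

/-- The summand of the multilateral series at the strictly shifted lattice point `y`, up to a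
constant: a product of Bailey weights times a Vandermonde determinant. -/
noncomputable def latticeWeight (q b c d : ℂ) (y : Fin n → ℤ) : ℂ :=
  (∏ i, (q ^ y i)⁻¹ ^ (i : ℕ) * bilateralWeight q b c d (y i)) *
    (Matrix.vandermonde fun i ↦ joukowski (q ^ y i)).det

lemma hasSum_latticeWeight (hq : q ≠ 0) (hq1 : ‖q‖ < 1) (hb : IsGeneric q b)
    (hc : IsGeneric q c) (hd : IsGeneric q d) {N : ℕ} (h : ‖q * b * c * d‖ < ‖q‖ ^ (2 * N)) :
    HasSum (fun y : Fin (N + 1) → ℤ ↦ latticeWeight q b c d y)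
      (Matrix.of fun i j : Fin (N + 1) ↦
        baileyFunctional q b c d (chebyshevThird ℂ i * X ^ (j : ℕ))).det := by
  have hentry (i j : Fin (N + 1)) :=
    hasSum_bilateralWeight hq hq1 hb hc hd (by omega : (i : ℕ) + j ≤ 2 * N) h
  exact hasSum_prod_mul_det_vandermonde
    (w := fun (i : Fin (N + 1)) y ↦ (q ^ y)⁻¹ ^ (i : ℕ) * bilateralWeight q b c d y)
    (u := fun y ↦ joukowski (q ^ y)) hentry fun i j ↦ (hentry i j).summable.norm

lemma latticeWeight_snoc (q b c d : ℂ) (y : Fin n → ℤ) (m : ℤ) :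
    latticeWeight q b c d (Fin.snoc y m : Fin (n + 1) → ℤ) = latticeWeight q b c d y *
      ((q ^ m)⁻¹ ^ n * bilateralWeight q b c d m *
        ∏ i, (joukowski (q ^ m) - joukowski (q ^ y i))) := by
  simp only [latticeWeight, Matrix.det_vandermonde, prod_Ioi_comm]
  simp only [Fin.prod_univ_castSucc, Fin.snoc_castSucc, Fin.snoc_last, Fin.val_castSucc,
    Fin.val_last, Fin.Iio_castSucc, Fin.Iio_last_eq_map, prod_map, Fin.coe_castSuccEmb]
  ring

lemma latticeWeight_ne_zero (hq : q ≠ 0) (hq1 : ‖q‖ < 1) (hb : IsGeneric q b)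
    (hc : IsGeneric q c) (hd : IsGeneric q d) {y : Fin n → ℤ} (hy : weylDenominator q y ≠ 0) :
    latticeWeight q b c d y ≠ 0 := by
  rw [weylDenominator_eq_det_vandermonde hq] at hy
  refine mul_ne_zero (prod_ne_zero_iff.mpr fun i _ ↦ mul_ne_zero ?_ ?_) (right_ne_zero_of_mul hy)
  · exact pow_ne_zero _ (inv_ne_zero (zpow_ne_zero _ hq))
  · exact bilateralWeight_ne_zero hq hq1 hb hc hd _

lemma qPochInt_natCast (hq : q ≠ 0) (hq1 : ‖q‖ < 1) (ht : IsGeneric q t) (k : ℕ) :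
    qPochInt t q k = qPoch t q k := by
  rw [qPochInt, zpow_natCast, ← qPoch_mul_qPochInf hq1 t k,
    mul_div_cancel_right₀ _ ((ht.mul_pow hq k).qPochInf_ne_zero hq hq1)]

lemma tendsto_bilateralFactor_div_pow (hq : q ≠ 0) (hq1 : ‖q‖ < 1) (ht : IsGeneric q t) :
    Tendsto (fun k : ℕ ↦ bilateralFactor q t k / t ^ k) atTop
      (𝓝 (qPochInf t⁻¹ q / qPochInf (t * q) q)) := by
  refine ((tendsto_qPoch hq1 t⁻¹).div (tendsto_qPoch hq1 (t * q))
    ((ht.mul_base hq).qPochInf_ne_zero hq hq1)).congr fun k ↦ ?_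
  rw [bilateralFactor, qPochInt_natCast hq hq1 ht.inv, qPochInt_natCast hq hq1 (ht.mul_base hq),
    zpow_natCast, mul_div_assoc, mul_div_cancel_left₀ _ (pow_ne_zero k ht.1), Pi.div_apply]

lemma tendsto_pow_mul_joukowski_sub (hq : q ≠ 0) (hq1 : ‖q‖ < 1) (a : ℂ) :
    Tendsto (fun k : ℕ ↦ q ^ k * (joukowski (q ^ k) - a)) atTop (𝓝 1) := by
  have hpow := tendsto_pow_atTop_nhds_zero_of_norm_lt_one hq1
  have h := ((hpow.pow 2).add_const 1).sub (hpow.mul_const a)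
  rw [zero_pow two_ne_zero, zero_add, zero_mul, sub_zero] at h
  refine h.congr fun k ↦ ?_
  have hk : q ^ k ≠ 0 := pow_ne_zero k hq
  rw [joukowski]
  field_simp

lemma norm_lt_one_of_tendsto_div_pow {l : ℕ → ℂ} {r L : ℂ} (hL : L ≠ 0)
    (hdiv : Tendsto (fun k ↦ l k / r ^ k) atTop (𝓝 L)) (hl : Tendsto l atTop (𝓝 0)) :
    ‖r‖ < 1 := by
  rw [← tendsto_pow_atTop_nhds_zero_iff_norm_lt_one]
  have h := hl.div hdiv hL
  rw [zero_div] at h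
  refine h.congr' ?_
  filter_upwards [hdiv.eventually_ne hL] with k hk
  exact div_div_cancel₀ (div_ne_zero_iff.mp hk).1

lemma tendsto_latticeWeight_snoc_factor (hq : q ≠ 0) (hq1 : ‖q‖ < 1) (hb : IsGeneric q b)
    (hc : IsGeneric q c) (hd : IsGeneric q d) (y : Fin n → ℤ) :
    ∃ L ≠ 0, Tendsto (fun k : ℕ ↦ (q ^ (k : ℤ))⁻¹ ^ n * bilateralWeight q b c d k *
      (∏ i, (joukowski (q ^ (k : ℤ)) - joukowski (q ^ y i))) /
        (q * b * c * d / q ^ (2 * n)) ^ k) atTop (𝓝 L) := by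
  have hlim {t : ℂ} (ht : IsGeneric q t) : qPochInf t⁻¹ q / qPochInf (t * q) q ≠ 0 :=
    div_ne_zero (ht.inv.qPochInf_ne_zero hq hq1) ((ht.mul_base hq).qPochInf_ne_zero hq hq1)
  refine ⟨_, mul_ne_zero (mul_ne_zero (hlim hb) (hlim hc)) (hlim hd), ?_⟩
  have hprod := tendsto_finsetProd univ fun (i : Fin n) _ ↦
    tendsto_pow_mul_joukowski_sub hq hq1 (joukowski (q ^ y i))
  have h := (((tendsto_bilateralFactor_div_pow hq hq1 hb).mul
    (tendsto_bilateralFactor_div_pow hq hq1 hc)).mul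
    (tendsto_bilateralFactor_div_pow hq hq1 hd)).mul hprod
  rw [prod_const_one, mul_one] at h
  refine h.congr fun k ↦ ?_
  have hk : q ^ k ≠ 0 := pow_ne_zero k hq
  have hb' := pow_ne_zero k hb.1
  have hc' := pow_ne_zero k hc.1
  have hd' := pow_ne_zero k hd.1
  rw [prod_mul_distrib, prod_const, card_univ, Fintype.card_fin, bilateralWeight, zpow_natCast,
    div_pow, mul_pow, mul_pow, mul_pow, inv_pow,
    show (q ^ (2 * n)) ^ k = (q ^ k) ^ n * (q ^ k) ^ n by ring]
  field_simp

lemma norm_lt_of_summable_latticeWeight (hq : q ≠ 0) (hq1 : ‖q‖ < 1) (hb : IsGeneric q b)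
    (hc : IsGeneric q c) (hd : IsGeneric q d) {N : ℕ}
    (h : Summable fun y : Fin (N + 1) → ℤ ↦ latticeWeight q b c d y) :
    ‖q * b * c * d‖ < ‖q‖ ^ (2 * N) := by
  obtain ⟨L, hL, htendsto⟩ :=
    tendsto_latticeWeight_snoc_factor hq hq1 hb hc hd (weylVector N)
  have hbase : latticeWeight q b c d (weylVector N) ≠ 0 :=
    latticeWeight_ne_zero hq hq1 hb hc hd (weylDenominator_weylVector_ne_zero hq1 N)
  have hinj : Function.Injective
      fun k : ℕ ↦ (Fin.snoc (weylVector N) (k : ℤ) : Fin (N + 1) → ℤ) := fun k l hkl ↦ by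
    simpa using congrFun hkl (Fin.last N)
  have hray : Tendsto (fun k : ℕ ↦
      latticeWeight q b c d (Fin.snoc (weylVector N) (k : ℤ) : Fin (N + 1) → ℤ)) atTop (𝓝 0) :=
    (h.comp_injective hinj).tendsto_atTop_zero
  have hnorm : ‖q * b * c * d / q ^ (2 * N)‖ < 1 := by
    refine norm_lt_one_of_tendsto_div_pow (mul_ne_zero hbase hL) ?_ hray
    simpa only [latticeWeight_snoc, mul_div_assoc] using
      htendsto.const_mul (latticeWeight q b c d (weylVector N))
  rwa [norm_div, norm_pow, div_lt_one (pow_pos (norm_pos_iff.mpr hq) _)] at hnorm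

end LatticeWeight

section Summand

variable {q b c d s : ℂ} {N : ℕ}

lemma bilateralWeight_add (hq : q ≠ 0) (hq1 : ‖q‖ < 1) (hb : IsGeneric q b)
    (hc : IsGeneric q c) (hd : IsGeneric q d) (y m : ℤ) :
    bilateralWeight q b c d (y + m) = bilateralWeight q b c d y * ((q * b * c * d) ^ m *
      (qPochInt (b⁻¹ * q ^ y) q m * qPochInt (c⁻¹ * q ^ y) q m * qPochInt (d⁻¹ * q ^ y) q m /
        (qPochInt (b * q * q ^ y) q m * qPochInt (c * q * q ^ y) q m *
          qPochInt (d * q * q ^ y) q m))) := by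
  rw [bilateralWeight, bilateralWeight, bilateralFactor_add hq hq1 hb,
    bilateralFactor_add hq hq1 hc, bilateralFactor_add hq hq1 hd, zpow_add₀ hq, mul_zpow,
    mul_zpow, mul_zpow]
  ring

lemma qPochIntVec_mul_pow (hq : q ≠ 0) (t : ℂ) (μ : Fin (N + 1) → ℤ) :
    qPochIntVec (N + 1) (t * q ^ N) q μ =
      ∏ r : Fin (N + 1), qPochInt (t * q ^ (r : ℤ)) q (μ r.rev) := by
  rw [qPochIntVec, ← Equiv.prod_comp Fin.revPerm]
  refine prod_congr rfl fun r _ ↦ ?_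
  have hrev : (N : ℤ) + -((r.rev : ℕ) : ℤ) = r := by
    rw [Fin.val_rev]
    omega
  rw [Fin.revPerm_apply, mul_assoc, ← zpow_natCast, ← zpow_add₀ hq, hrev]

lemma zpow_sum₀ {G ι : Type*} [CommGroupWithZero G] {a : G} (ha : a ≠ 0) (s : Finset ι)
    (f : ι → ℤ) : a ^ ∑ i ∈ s, f i = ∏ i ∈ s, a ^ f i := by
  induction s using Finset.cons_induction with
  | empty => simp
  | cons i s hi ih => rw [sum_cons, prod_cons, zpow_add₀ ha, ih]

lemma zpow_mul_zpow_sum_eq_prod (hq : q ≠ 0) (hs : s ≠ 0) (μ : Fin (N + 1) → ℤ) :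
    q ^ ((1 - ((N + 1 : ℕ) : ℤ)) * ∑ i, μ i + 2 * ∑ i : Fin (N + 1), (i : ℤ) * μ i) *
        s ^ ∑ i, μ i =
      ∏ r : Fin (N + 1), (s * q ^ N) ^ μ r.rev * (q ^ μ r.rev)⁻¹ ^ (2 * (r : ℕ)) := by
  rw [mul_sum, mul_sum, ← sum_add_distrib, zpow_sum₀ hq, zpow_sum₀ hs, ← prod_mul_distrib,
    ← Equiv.prod_comp Fin.revPerm]
  refine prod_congr rfl fun r _ ↦ ?_
  have hrev : ((r.rev : ℕ) : ℤ) = N - r := by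
    rw [Fin.val_rev]
    omega
  have hexp : (1 - ((N + 1 : ℕ) : ℤ)) * μ r.rev + 2 * ((r.rev : ℕ) * μ r.rev) =
      N * μ r.rev + -μ r.rev * (2 * r : ℕ) := by
    rw [hrev]
    push_cast
    ring
  rw [Fin.revPerm_apply, hexp, zpow_add₀ hq, zpow_mul, zpow_mul, zpow_natCast, zpow_natCast,
    zpow_neg, mul_zpow]
  ring

lemma prod_latticeWeight_factor (hq : q ≠ 0) (hq1 : ‖q‖ < 1) (hb : IsGeneric q b)
    (hc : IsGeneric q c) (hd : IsGeneric q d) (hs : s * q ^ N = q * b * c * d)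
    (μ : Fin (N + 1) → ℤ) :
    q ^ ((1 - ((N + 1 : ℕ) : ℤ)) * ∑ i, μ i + 2 * ∑ i : Fin (N + 1), (i : ℤ) * μ i) *
        s ^ (∑ i, μ i) *
        (qPochIntVec (N + 1) (b⁻¹ * q ^ N) q μ * qPochIntVec (N + 1) (c⁻¹ * q ^ N) q μ *
            qPochIntVec (N + 1) (d⁻¹ * q ^ N) q μ /
          (qPochIntVec (N + 1) (b * q * q ^ N) q μ * qPochIntVec (N + 1) (c * q * q ^ N) q μ *
            qPochIntVec (N + 1) (d * q * q ^ N) q μ)) =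
      (∏ r ∈ range (N + 1), q ^ (2 * r ^ 2) / baileyWeight q b c d r) *
        ∏ r : Fin (N + 1), (q ^ revAddWeylVector (N + 1) μ r)⁻¹ ^ (2 * (r : ℕ)) *
          bilateralWeight q b c d (revAddWeylVector (N + 1) μ r) := by
  have hs0 : s ≠ 0 := by
    rintro rfl
    rw [zero_mul] at hs
    exact mul_ne_zero (mul_ne_zero (mul_ne_zero hq hb.1) hc.1) hd.1 hs.symm
  rw [zpow_mul_zpow_sum_eq_prod hq hs0, hs]
  simp only [qPochIntVec_mul_pow hq, ← prod_mul_distrib, ← prod_div_distrib, prod_range]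
  refine prod_congr rfl fun r _ ↦ ?_
  have hW := bilateralWeight_ne_zero hq hq1 hb hc hd r
  rw [revAddWeylVector_apply, add_comm (μ r.rev), bilateralWeight_add hq hq1 hb hc hd,
    ← bilateralWeight_natCast hq hq1 hb hc hd, zpow_add₀ hq, zpow_natCast]
  rw [mul_inv, mul_pow, inv_pow (q ^ (r : ℕ)),
    show q ^ (2 * (r : ℕ) ^ 2) = (q ^ (r : ℕ)) ^ (2 * (r : ℕ)) by ring]
  field_simp

lemma summand_eq_latticeWeight (hq : q ≠ 0) (hq1 : ‖q‖ < 1) (hb : IsGeneric q b)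
    (hc : IsGeneric q c) (hd : IsGeneric q d) (hs : s * q ^ N = q * b * c * d)
    (μ : Fin (N + 1) → ℤ) :
    q ^ ((1 - ((N + 1 : ℕ) : ℤ)) * ∑ i, μ i + 2 * ∑ i : Fin (N + 1), (i : ℤ) * μ i) *
        s ^ (∑ i, μ i) *
        (qPochIntVec (N + 1) (b⁻¹ * q ^ N) q μ * qPochIntVec (N + 1) (c⁻¹ * q ^ N) q μ *
            qPochIntVec (N + 1) (d⁻¹ * q ^ N) q μ /
          (qPochIntVec (N + 1) (b * q * q ^ N) q μ * qPochIntVec (N + 1) (c * q * q ^ N) q μ *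
            qPochIntVec (N + 1) (d * q * q ^ N) q μ)) *
        (weylDenominator q (revAddWeylVector (N + 1) μ) /
          weylDenominator q (weylVector (N + 1)) ^ 2) =
      (∏ r ∈ range (N + 1), q ^ (2 * r ^ 2) / baileyWeight q b c d r) /
        weylDenominator q (weylVector (N + 1)) ^ 2 *
          latticeWeight q b c d (revAddWeylVector (N + 1) μ) := by
  have hprod (y : Fin (N + 1) → ℤ) :
      ∏ r, (q ^ y r)⁻¹ ^ (r : ℕ) * bilateralWeight q b c d (y r) =
        (∏ r, (q ^ y r)⁻¹ ^ (2 * (r : ℕ)) * bilateralWeight q b c d (y r)) *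
          ∏ r, (q ^ y r) ^ (r : ℕ) := by
    rw [← prod_mul_distrib]
    refine prod_congr rfl fun r _ ↦ ?_
    rw [two_mul, pow_add, inv_pow]
    field_simp
  rw [prod_latticeWeight_factor hq hq1 hb hc hd hs, weylDenominator_eq_det_vandermonde hq
    (revAddWeylVector (N + 1) μ), latticeWeight, hprod]
  ring

end Summand

section Evaluation

variable {q b c d s t : ℂ} {N : ℕ}

lemma prod_neg_pow_sq_mul_pow (q : ℂ) (r : ℕ) :
    (∏ k ∈ range r, -q ^ k) ^ 2 * q ^ r = q ^ r ^ 2 := by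
  induction r with
  | zero => simp
  | succ r ih =>
    rw [prod_range_succ, show (r + 1) ^ 2 = r ^ 2 + 2 * r + 1 by ring, pow_add q (r ^ 2 + 2 * r),
      pow_add q (r ^ 2), ← ih]
    ring

lemma qPoch_inv_inv_mul_prod (hq : q ≠ 0) (r : ℕ) :
    qPoch q⁻¹ q⁻¹ r * (q ^ r * ∏ k ∈ range r, -q ^ k) = qPoch q q r := by
  rw [← card_range r, ← prod_const, card_range, qPoch, qPoch, ← prod_mul_distrib,
    ← prod_mul_distrib]
  refine prod_congr rfl fun k _ ↦ ?_
  rw [inv_pow]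
  field_simp
  ring

lemma baileyWeight_ne_zero (hq : q ≠ 0) (hq1 : ‖q‖ < 1) (hb : IsGeneric q b)
    (hc : IsGeneric q c) (hd : IsGeneric q d) (y : ℕ) : baileyWeight q b c d y ≠ 0 := by
  rw [← bilateralWeight_natCast hq hq1 hb hc hd]
  exact bilateralWeight_ne_zero hq hq1 hb hc hd y

lemma pow_div_baileyWeight_mul_qPoch (hq : q ≠ 0) (hq1 : ‖q‖ < 1) (hb : IsGeneric q b)
    (hc : IsGeneric q c) (hd : IsGeneric q d) (r : ℕ) :
    q ^ (2 * r ^ 2) / baileyWeight q b c d r *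
        (qPoch q⁻¹ q⁻¹ r * (qPoch b q⁻¹ r * qPoch c q⁻¹ r * qPoch d q⁻¹ r)) =
      qPoch q q r * (qPoch (b * q) q r * qPoch (c * q) q r * qPoch (d * q) q r) := by
  have hfb := wellPoisedFactor_mul_qPoch hq (hb.noPole hq) r
  have hfc := wellPoisedFactor_mul_qPoch hq (hc.noPole hq) r
  have hfd := wellPoisedFactor_mul_qPoch hq (hd.noPole hq) r
  have hpow : q ^ (2 * r ^ 2) = ((∏ k ∈ range r, -q ^ k) ^ 2 * q ^ r) ^ 2 := by
    rw [prod_neg_pow_sq_mul_pow, ← pow_mul, mul_comm]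
  rw [div_mul_eq_mul_div, div_eq_iff (baileyWeight_ne_zero hq hq1 hb hc hd r), hpow,
    ← qPoch_inv_inv_mul_prod hq, baileyWeight]
  calc _ = qPoch q⁻¹ q⁻¹ r * (q ^ r) ^ 2 * (∏ k ∈ range r, -q ^ k) *
        (((∏ k ∈ range r, -q ^ k) * qPoch b q⁻¹ r) * ((∏ k ∈ range r, -q ^ k) * qPoch c q⁻¹ r) *
          ((∏ k ∈ range r, -q ^ k) * qPoch d q⁻¹ r)) := by ring
    _ = _ := by rw [← hfb, ← hfc, ← hfd]; ring

lemma prod_mul_det_baileyFunctional (hq : q ≠ 0) (hq1 : ‖q‖ < 1) (hb : IsGeneric q b)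
    (hc : IsGeneric q c) (hd : IsGeneric q d) (hbcd : IsGeneric q (b * c * d))
    (h : ‖q * b * c * d‖ < ‖q‖ ^ (2 * N)) :
    (∏ r ∈ range (N + 1), q ^ (2 * r ^ 2) / baileyWeight q b c d r) *
        (Matrix.of fun i j : Fin (N + 1) ↦
          baileyFunctional q b c d (chebyshevThird ℂ i * X ^ (j : ℕ))).det =
      baileySum q b c d ^ (N + 1) * ∏ r ∈ range (N + 1),
        qPoch q q r * (qPoch (b * q) q r * qPoch (c * q) q r * qPoch (d * q) q r) *
          (qPoch (b * c) q⁻¹ r * qPoch (b * d) q⁻¹ r * qPoch (c * d) q⁻¹ r) /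
            qPoch (b * c * d) q⁻¹ (N + r) := by
  rw [det_baileyFunctional_chebyshevThird hq hq1 hb hc (hd.noPole hq) hbcd h, mul_left_comm,
    ← prod_mul_distrib]
  congr 1
  refine prod_congr rfl fun r _ ↦ ?_
  rw [← pow_div_baileyWeight_mul_qPoch hq hq1 hb hc hd]
  ring

lemma qPochInfVec_eq_of_mul_pow (hq : q ≠ 0) (hq1 : ‖q‖ < 1) {M : ℕ} (hs : s * q ^ M = t * q)
    (n : ℕ) : qPochInfVec n s q =
      qPochInf (t * q) q ^ n * ∏ r ∈ range n, qPoch t q⁻¹ (M + r) := by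
  rw [qPochInfVec, Fin.prod_univ_eq_prod_range fun i ↦ qPochInf (s * q ^ (-(i : ℤ))) q,
    ← card_range n, ← prod_const, card_range, ← prod_mul_distrib]
  refine prod_congr rfl fun r _ ↦ ?_
  have hr : q ^ (M + r) ≠ 0 := pow_ne_zero _ hq
  have hs' : s * q ^ (-(r : ℤ)) = t * q / q ^ (M + r) := by
    rw [← hs, zpow_neg, zpow_natCast, pow_add]
    field_simp
  rw [hs', ← qPoch_mul_qPochInf hq1 _ (M + r), qPoch_inv_base hq, div_mul_cancel₀ _ hr, mul_comm]

lemma qPochInfVec_mul_pow_mul_prod (hq : q ≠ 0) (hq1 : ‖q‖ < 1) (t : ℂ) (N M : ℕ) :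
    qPochInfVec (N + 1) (t * q ^ (N + M)) q * ∏ r ∈ range (N + 1), qPoch t q (M + r) =
      qPochInf t q ^ (N + 1) := by
  rw [qPochInfVec,
    Fin.prod_univ_eq_prod_range fun i ↦ qPochInf (t * q ^ (N + M) * q ^ (-(i : ℤ))) q,
    ← prod_range_reflect, ← prod_mul_distrib]
  refine prod_eq_pow_card (fun r hr ↦ ?_) |>.trans (by rw [card_range])
  have hexp : ((N + M : ℕ) : ℤ) + -((N + 1 - 1 - r : ℕ) : ℤ) = (M + r : ℕ) := by
    have := mem_range.mp hr
    omega
  rw [mul_assoc, ← zpow_natCast q (N + M), ← zpow_add₀ hq, hexp, zpow_natCast, mul_comm,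
    qPoch_mul_qPochInf hq1]

end Evaluation

section Product

variable {q b c d s : ℂ} {N : ℕ}

lemma prod_Icc_one_add_pow_sub (q : ℂ) (N : ℕ) :
    ∏ i ∈ Icc 1 N, (1 + q ^ (N + 1 - i)) = ∏ i ∈ range N, (1 + q ^ (i + 1)) := by
  refine prod_nbij' (fun i ↦ N - i) (fun i ↦ N - i) ?_ ?_ ?_ ?_ ?_ <;> intro i hi <;>
    simp only [mem_Icc, mem_range] at hi ⊢
  case refine_5 => rw [Nat.sub_add_comm hi.2]
  all_goals omega

lemma qPochInfVec_mul_base (hq : q ≠ 0) (hq1 : ‖q‖ < 1) (t : ℂ) (n : ℕ) :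
    qPochInfVec n (t * q) q = qPochInf (t * q) q ^ n * ∏ r ∈ range n, qPoch t q⁻¹ r := by
  simpa using qPochInfVec_eq_of_mul_pow (M := 0) hq hq1 (by rw [pow_zero, mul_one]) n

lemma qPochInfVec_mul_base_mul_pow (hq : q ≠ 0) (hq1 : ‖q‖ < 1) {t : ℂ} (ht : IsGeneric q t)
    (N : ℕ) : qPochInfVec (N + 1) (t * q * q ^ N) q =
      qPochInf (t * q) q ^ (N + 1) / ∏ r ∈ range (N + 1), qPoch (t * q) q r := by
  refine eq_div_of_mul_eq (prod_ne_zero_iff.2 fun r _ ↦ (ht.mul_base hq).qPoch_ne_zero hq r) ?_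
  simpa using qPochInfVec_mul_pow_mul_prod hq hq1 (t * q) N 0

lemma qPoch_self_ne_zero (hq1 : ‖q‖ < 1) (k : ℕ) : qPoch q q k ≠ 0 :=
  prod_ne_zero_iff.2 fun i _ ↦ by
    simpa [pow_succ'] using one_sub_pow_succ_ne_zero hq1 i

lemma pow_baileySum (hq : q ≠ 0) (hq1 : ‖q‖ < 1) (hb : IsGeneric q b)
    (hc : IsGeneric q c) (hd : IsGeneric q d) (hbcd : IsGeneric q (b * c * d))
    (h : ‖q * b * c * d‖ < 1) (n : ℕ) :
    baileySum q b c d ^ n =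
      qPochInf q q ^ n * qPochInf (b * c * q) q ^ n * qPochInf (b * d * q) q ^ n *
          qPochInf (c * d * q) q ^ n /
        (qPochInf (b * c * d * q) q ^ n * qPochInf (b * q) q ^ n * qPochInf (c * q) q ^ n *
          qPochInf (d * q) q ^ n) := by
  have hne {t : ℂ} (ht : IsGeneric q t) : qPochInf (t * q) q ≠ 0 :=
    (ht.noPole hq).qPochInf_ne_zero hq1
  simp only [← mul_pow, ← div_pow]
  congr 1
  refine eq_div_of_mul_eq (mul_ne_zero (mul_ne_zero (mul_ne_zero (hne hbcd) (hne hb)) (hne hc))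
    (hne hd)) ?_
  rw [mul_comm, baileySum_eq hq hq1 (hb.noPole hq) (hc.noPole hq) (hd.noPole hq) h]

lemma qPochInfVec_quotient_eq (hq : q ≠ 0) (hq1 : ‖q‖ < 1) (hb : IsGeneric q b)
    (hc : IsGeneric q c) (hd : IsGeneric q d) (hbcd : IsGeneric q (b * c * d))
    (h : ‖q * b * c * d‖ < 1) (hs : s * q ^ N = q * b * c * d) :
    qPochInfVec (N + 1) (b * d * q) q * qPochInfVec (N + 1) (b * c * q) q *
          qPochInfVec (N + 1) (q * q ^ (N + N)) q * qPochInfVec (N + 1) (c * d * q) q /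
        (qPochInfVec (N + 1) s q * qPochInfVec (N + 1) (b * q * q ^ N) q *
          qPochInfVec (N + 1) (c * q * q ^ N) q * qPochInfVec (N + 1) (d * q * q ^ N) q) =
      baileySum q b c d ^ (N + 1) * ∏ r ∈ range (N + 1),
        qPoch (b * q) q r * qPoch (c * q) q r * qPoch (d * q) q r *
          (qPoch (b * c) q⁻¹ r * qPoch (b * d) q⁻¹ r * qPoch (c * d) q⁻¹ r) /
            (qPoch q q (N + r) * qPoch (b * c * d) q⁻¹ (N + r)) := by
  have hqpoch : ∏ r ∈ range (N + 1), qPoch q q (N + r) ≠ 0 :=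
    prod_ne_zero_iff.2 fun r _ ↦ qPoch_self_ne_zero hq1 (N + r)
  rw [pow_baileySum hq hq1 hb hc hd hbcd h, qPochInfVec_mul_base hq hq1,
    qPochInfVec_mul_base hq hq1, qPochInfVec_mul_base hq hq1,
    qPochInfVec_eq_of_mul_pow (s := s) (t := b * c * d) hq hq1 (by rw [hs]; ring),
    eq_div_of_mul_eq hqpoch (qPochInfVec_mul_pow_mul_prod hq hq1 q N N),
    qPochInfVec_mul_base_mul_pow hq hq1 hb, qPochInfVec_mul_base_mul_pow hq hq1 hc,
    qPochInfVec_mul_base_mul_pow hq hq1 hd]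
  simp only [prod_mul_distrib, prod_inv_distrib, div_eq_mul_inv, mul_inv, inv_inv]
  ring

theorem prod_mul_qPochInfVec_eq_det (hq : q ≠ 0) (hq1 : ‖q‖ < 1) (hb : IsGeneric q b)
    (hc : IsGeneric q c) (hd : IsGeneric q d) (hbcd : IsGeneric q (b * c * d))
    (h : ‖q * b * c * d‖ < ‖q‖ ^ (2 * N)) (hs : s * q ^ N = q * b * c * d) :
    (∏ i ∈ range N, (1 + q ^ (i + 1))) *
        (qPochInfVec (N + 1) (b * d * q) q * qPochInfVec (N + 1) (b * c * q) q *
            qPochInfVec (N + 1) (q * q ^ (N + N)) q * qPochInfVec (N + 1) (c * d * q) q /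
          (qPochInfVec (N + 1) s q * qPochInfVec (N + 1) (b * q * q ^ N) q *
            qPochInfVec (N + 1) (c * q * q ^ N) q * qPochInfVec (N + 1) (d * q * q ^ N) q)) =
      (∏ r ∈ range (N + 1), q ^ (2 * r ^ 2) / baileyWeight q b c d r) /
          weylDenominator q (weylVector (N + 1)) ^ 2 *
        (Matrix.of fun i j : Fin (N + 1) ↦
          baileyFunctional q b c d (chebyshevThird ℂ i * X ^ (j : ℕ))).det := by
  have hD := pow_ne_zero 2 (weylDenominator_weylVector_ne_zero hq1 (N + 1))
  rw [qPochInfVec_quotient_eq hq hq1 hb hc hd hbcd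
    (h.trans_le (pow_le_one₀ (norm_nonneg q) hq1.le)) hs, div_mul_eq_mul_div,
    prod_mul_det_baileyFunctional hq hq1 hb hc hd hbcd h, eq_div_iff hD, mul_right_comm,
    prod_one_add_mul_weylDenominator_sq, mul_left_comm, ← prod_mul_distrib]
  congr 1
  refine prod_congr rfl fun r _ ↦ ?_
  have hqr := qPoch_self_ne_zero hq1 (N + r)
  field_simp

end Product

section Substitution

variable {q b c d s a x : ℂ} {N : ℕ}

lemma exists_isGeneric_substitution (hq : q ≠ 0) (hs : IsGeneric q s) (hx : IsGeneric q x)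
    (has : IsGeneric q (a * s)) (hax : IsGeneric q (a * x)) (N : ℕ) :
    ∃ b c d, IsGeneric q b ∧ IsGeneric q c ∧ IsGeneric q d ∧ IsGeneric q (b * c * d) ∧
      s = q * b * c * d / q ^ N ∧ a = q ^ (N + N) / (c * d) ∧ x = c / q ^ N := by
  have ha := left_ne_zero_of_mul hax.1
  have hx0 := hx.1
  have hqN := pow_ne_zero N hq
  refine ⟨a * s / q ^ (N + 1), x * q ^ N, (a * x / q ^ N)⁻¹, has.div_pow hq _, hx.mul_pow hq N,
    (hax.div_pow hq N).inv, ?_, ?_, ?_, (mul_div_cancel_right₀ x hqN).symm⟩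
  · convert (hs.mul_pow hq N).div_pow hq 1 using 1
    field_simp
    ring
  · field_simp
    ring
  · field_simp
    ring

lemma zpow_two_mul_succ_sub_one (q : ℂ) (N : ℕ) :
    q ^ (2 * ((N + 1 : ℕ) : ℤ) - 1) = q * q ^ (N + N) := by
  rw [← pow_succ', ← zpow_natCast]
  congr 1
  push_cast
  ring

lemma multilateral_summand_eq (hq : q ≠ 0) (hq1 : ‖q‖ < 1) (hb : IsGeneric q b)
    (hc : IsGeneric q c) (hd : IsGeneric q d) (hs : s = q * b * c * d / q ^ N)
    (ha : a = q ^ (N + N) / (c * d)) (hx : x = c / q ^ N) (μ : Fin (N + 1) → ℤ) :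
    q ^ ((1 - ((N + 1 : ℕ) : ℤ)) * ∑ i, μ i + 2 * ∑ i : Fin (N + 1), (i : ℤ) * μ i) *
        s ^ (∑ i, μ i) *
        (qPochIntVec (N + 1) (q ^ (2 * ((N + 1 : ℕ) : ℤ) - 1) / (a * s)) q μ *
            qPochIntVec (N + 1) x⁻¹ q μ * qPochIntVec (N + 1) (a * x) q μ /
          (qPochIntVec (N + 1) (a * s) q μ *
            qPochIntVec (N + 1) (q ^ (2 * ((N + 1 : ℕ) : ℤ) - 1) * x) q μ *
            qPochIntVec (N + 1) (q ^ (2 * ((N + 1 : ℕ) : ℤ) - 1) / (a * x)) q μ)) *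
        ∏ i : Fin (N + 1), ∏ j ∈ Ioi i, ((1 - q ^ ((j : ℤ) - i + μ i - μ j)) *
          (1 - q ^ (2 * ((N + 1 : ℕ) : ℤ) - 2 - i - j + μ i + μ j)) /
            ((1 - q ^ ((j : ℤ) - i)) ^ 2 *
              (1 - q ^ (2 * ((N + 1 : ℕ) : ℤ) - 2 - i - j)) ^ 2)) =
      (∏ r ∈ range (N + 1), q ^ (2 * r ^ 2) / baileyWeight q b c d r) /
        weylDenominator q (weylVector (N + 1)) ^ 2 *
          latticeWeight q b c d (revAddWeylVector (N + 1) μ) := by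
  have hb0 := hb.1
  have hc0 := hc.1
  have hd0 := hd.1
  have has : a * s = b * q * q ^ N := by
    rw [ha, hs, pow_add]
    field_simp
  have hax : a * x = d⁻¹ * q ^ N := by
    rw [ha, hx, pow_add]
    field_simp
  have hqas : q * q ^ (N + N) / (b * q * q ^ N) = b⁻¹ * q ^ N := by
    rw [pow_add]
    field_simp
  have hqx : q * q ^ (N + N) * x = c * q * q ^ N := by
    rw [hx, pow_add]
    field_simp
  have hqax : q * q ^ (N + N) / (d⁻¹ * q ^ N) = d * q * q ^ N := by
    rw [pow_add]
    field_simp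
  have hxinv : x⁻¹ = c⁻¹ * q ^ N := by rw [hx, inv_div, div_eq_inv_mul]
  rw [zpow_two_mul_succ_sub_one, has, hax, hqas, hqx, hqax, hxinv,
    prod_weylDenominator_quotient, summand_eq_latticeWeight hq hq1 hb hc hd
      (by rw [hs, div_mul_cancel₀ _ (pow_ne_zero N hq)])]

lemma multilateral_product_eq (hq : q ≠ 0) (hq1 : ‖q‖ < 1) (hb : IsGeneric q b)
    (hc : IsGeneric q c) (hd : IsGeneric q d) (hbcd : IsGeneric q (b * c * d))
    (hs : s = q * b * c * d / q ^ N) (ha : a = q ^ (N + N) / (c * d)) (hx : x = c / q ^ N)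
    (h : ‖q * b * c * d‖ < ‖q‖ ^ (2 * N)) :
    (∏ i ∈ Icc 1 (N + 1 - 1), (1 + q ^ (N + 1 - i))) *
        (qPochInfVec (N + 1) (s * x⁻¹) q * qPochInfVec (N + 1) (a * s * x) q *
            qPochInfVec (N + 1) (q ^ (2 * ((N + 1 : ℕ) : ℤ) - 1)) q *
            qPochInfVec (N + 1) (q ^ (2 * ((N + 1 : ℕ) : ℤ) - 1) / a) q /
          (qPochInfVec (N + 1) s q * qPochInfVec (N + 1) (a * s) q *
            qPochInfVec (N + 1) (q ^ (2 * ((N + 1 : ℕ) : ℤ) - 1) * x) q *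
            qPochInfVec (N + 1) (q ^ (2 * ((N + 1 : ℕ) : ℤ) - 1) / (a * x)) q)) =
      (∏ r ∈ range (N + 1), q ^ (2 * r ^ 2) / baileyWeight q b c d r) /
          weylDenominator q (weylVector (N + 1)) ^ 2 *
        (Matrix.of fun i j : Fin (N + 1) ↦
          baileyFunctional q b c d (chebyshevThird ℂ i * X ^ (j : ℕ))).det := by
  have hb0 := hb.1
  have hc0 := hc.1
  have hd0 := hd.1
  have hsx : s * x⁻¹ = b * d * q := by
    rw [hs, hx]
    field_simp
  have hasx : a * s * x = b * c * q := by
    rw [ha, hs, hx, pow_add]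
    field_simp
  have hqa : q * q ^ (N + N) / a = c * d * q := by
    rw [ha, pow_add]
    field_simp
  have has : a * s = b * q * q ^ N := by
    rw [ha, hs, pow_add]
    field_simp
  have hqx : q * q ^ (N + N) * x = c * q * q ^ N := by
    rw [hx, pow_add]
    field_simp
  have hqax : q * q ^ (N + N) / (a * x) = d * q * q ^ N := by
    rw [ha, hx, pow_add]
    field_simp
  rw [zpow_two_mul_succ_sub_one, hsx, hasx, hqa, has, hqx, hqax, Nat.add_sub_cancel,
    prod_Icc_one_add_pow_sub, prod_mul_qPochInfVec_eq_det hq hq1 hb hc hd hbcd h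
      (by rw [hs, div_mul_cancel₀ _ (pow_ne_zero N hq)])]

end Substitution

/-- the multilateral analogue of Bailey's `₃ψ₃` summation (`δ = 0` case). -/
theorem multilateral_3psi3_delta_zero (n : ℕ) (hn : 0 < n) (q s a x : ℂ)
    (hq0 : 0 < ‖q‖) (hq1 : ‖q‖ < 1)
    (ha0 : a ≠ 0) (hx0 : x ≠ 0) (hs0 : s ≠ 0)
    (h : ∀ m : ℤ, s ≠ q ^ m ∧ a * s ≠ q ^ m ∧ x ≠ q ^ m ∧ a * x ≠ q ^ m ∧
      s * x⁻¹ ≠ q ^ m ∧ a * s * x ≠ q ^ m)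
    (F : (Fin n → ℤ) → ℂ)
    (hF : ∀ μ : Fin n → ℤ, F μ =
      q ^ ((1 - (n : ℤ)) * (∑ i : Fin n, μ i) + 2 * ∑ i : Fin n, ((i : ℕ) : ℤ) * μ i) * s ^ (∑ i : Fin n, μ i) *
      (qPochIntVec n (q ^ (2 * (n : ℤ) - 1) / (a * s)) q μ * qPochIntVec n x⁻¹ q μ *
        qPochIntVec n (a * x) q μ /
        (qPochIntVec n (a * s) q μ * qPochIntVec n (q ^ (2 * (n : ℤ) - 1) * x) q μ *
          qPochIntVec n (q ^ (2 * (n : ℤ) - 1) / (a * x)) q μ)) *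
      ∏ i : Fin n, ∏ j ∈ Finset.Ioi i,
        ((1 - q ^ (((j : ℕ) : ℤ) - ((i : ℕ) : ℤ) + μ i - μ j)) *
          (1 - q ^ (2 * (n : ℤ) - 2 - ((i : ℕ) : ℤ) - ((j : ℕ) : ℤ) + μ i + μ j)) /
          ((1 - q ^ (((j : ℕ) : ℤ) - ((i : ℕ) : ℤ))) ^ 2 *
            (1 - q ^ (2 * (n : ℤ) - 2 - ((i : ℕ) : ℤ) - ((j : ℕ) : ℤ))) ^ 2)))
    (hsum : Summable F) :
    (∏ i ∈ Finset.Icc 1 (n - 1), (1 + q ^ (n - i))) *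
      (qPochInfVec n (s * x⁻¹) q * qPochInfVec n (a * s * x) q *
        qPochInfVec n (q ^ (2 * (n : ℤ) - 1)) q *
        qPochInfVec n (q ^ (2 * (n : ℤ) - 1) / a) q /
        (qPochInfVec n s q * qPochInfVec n (a * s) q *
          qPochInfVec n (q ^ (2 * (n : ℤ) - 1) * x) q *
          qPochInfVec n (q ^ (2 * (n : ℤ) - 1) / (a * x)) q))
    = ∑' μ : Fin n → ℤ, F μ := by
  have hq : q ≠ 0 := norm_pos_iff.1 hq0
  obtain ⟨N, rfl : n = N + 1⟩ := Nat.exists_eq_succ_of_ne_zero hn.ne'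
  obtain ⟨b, c, d, hb, hc, hd, hbcd, hs, ha, hx⟩ := exists_isGeneric_substitution hq
    ⟨hs0, fun m ↦ (h m).1⟩ ⟨hx0, fun m ↦ (h m).2.2.1⟩
    ⟨mul_ne_zero ha0 hs0, fun m ↦ (h m).2.1⟩ ⟨mul_ne_zero ha0 hx0, fun m ↦ (h m).2.2.2.1⟩ N
  have hF' (μ) := (hF μ).trans (multilateral_summand_eq hq hq1 hb hc hd hs ha hx μ)
  have hconst : (∏ r ∈ range (N + 1), q ^ (2 * r ^ 2) / baileyWeight q b c d r) /
      weylDenominator q (weylVector (N + 1)) ^ 2 ≠ 0 :=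
    div_ne_zero (prod_ne_zero_iff.2 fun r _ ↦ div_ne_zero (pow_ne_zero _ hq)
      (baileyWeight_ne_zero hq hq1 hb hc hd r))
      (pow_ne_zero 2 (weylDenominator_weylVector_ne_zero hq1 (N + 1)))
  have hsummable : Summable fun y : Fin (N + 1) → ℤ ↦ latticeWeight q b c d y := by
    rw [← (revAddWeylVector (N + 1)).summable_iff, ← summable_mul_left_iff hconst]
    exact hsum.congr hF'
  have hbound := norm_lt_of_summable_latticeWeight hq hq1 hb hc hd hsummable
  rw [multilateral_product_eq hq hq1 hb hc hd hbcd hs ha hx hbound, tsum_congr hF', tsum_mul_left,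
    (revAddWeylVector (N + 1)).tsum_eq fun y ↦ latticeWeight q b c d y,
    (hasSum_latticeWeight hq hq1 hb hc hd hbound).tsum_eq]
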